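/- arXiv:2310.15462 — 2 statements merged into one kernel-verified Lean document; each statement's English description precedes it below -/
import Mathlib

section
/- Under Assumption 2.1 and with the multiple empirical integrals I_k^{(n)} defined from the triangular array, for every k ≥ 0 and all f, g ∈ L²(μ^k), one has 𝔼[I_k^{(n)}(f) · I_k^{(n)}(g)] → k! ⟨f̃, g̃⟩_{L²(μ^k)} as n → ∞, where f̃, g̃ are the symmetrizations of f and g. -/
open MeasureTheory ProbabilityTheory Filter Topology
open scoped ENNReal NNReal

/-- **Assumption 2.1** of the paper, for data `(μ, a, P)`. -/
def Assumption21 {E : Type*} [MeasurableSpace E] (μ : Measure E) (a : ℕ → ℝ)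
    (P : ℕ → Measure E) : Prop :=
  μ Set.univ = ∞ ∧
  (∀ n : ℕ, 1 ≤ n → 0 < a n) ∧
  Tendsto a atTop atTop ∧
  Tendsto (fun n : ℕ => a n / n) atTop (𝓝 0) ∧
  (∀ B : Set E, MeasurableSet B → ∀ n : ℕ, 1 ≤ n →
    ENNReal.ofReal ((n : ℝ) / a n) * P n B ≤ ENNReal.ofReal (((n : ℝ) + 1) / a (n + 1)) * P (n + 1) B) ∧
  (∀ B : Set E, MeasurableSet B →
    Tendsto (fun n : ℕ => ENNReal.ofReal ((n : ℝ) / a n) * P n B) atTop (𝓝 (μ B)))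

/-- The positive (`true`) and negative (`false`) parts of the signed measure `√a · W_n`. -/
noncomputable def mixMeasure {E : Type*} [MeasurableSpace E] (P : Measure E) (n : ℕ)
    (X : Fin n → E) : Bool → Measure E
  | true => ∑ j : Fin n, Measure.dirac (X j)
  | false => (n : ℝ≥0) • P

/-- The multiple empirical integral `I_k^{(n)}(f)` for one realization `X` of the sample:
the integral of `f` over the off-diagonal set with respect to the `k`-fold product of the
signed measure `W_n = a^{-1/2} (Σ_j δ_{X_j} − n P)`, expanded multilinearly into its
positive and negative parts. -/
noncomputable def empInt {E : Type*} [MeasurableSpace E] (P : Measure E)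
    (n : ℕ) (a : ℝ) (X : Fin n → E) (k : ℕ) (f : (Fin k → E) → ℝ) : ℝ :=
  (Real.sqrt a)⁻¹ ^ k *
    ∑ ε : Fin k → Bool,
      (-1 : ℝ) ^ (Finset.univ.filter fun i => ε i = false).card *
        ∫ u in {u : Fin k → E | Function.Injective u}, f u
          ∂(Measure.pi fun i => mixMeasure P n X (ε i))

/-- The symmetrization `f̃` of a function of `k` variables. -/
noncomputable def symmetrize {E : Type*} (k : ℕ) (f : (Fin k → E) → ℝ) :
    (Fin k → E) → ℝ :=
  fun u => (k.factorial : ℝ)⁻¹ * ∑ σ : Equiv.Perm (Fin k), f (u ∘ σ)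

/-!
Replacing each occurrence of `n P` in `Σ_j δ_{X_j} − n P` by `Σ_j P` and integrating `P` as the law
of a fresh independent point, `𝔼[I_k(f) I_k(g)]` becomes `a⁻ᵏ` times a signed sum, over placements
of the `2k` arguments at the `n` sample points, in which every argument may alternatively sit at a
private independent copy. If an argument is alone at its sample point, exchanging that point with
the private copy preserves the law and flips the sign, so these terms cancel. In the at most
`k²ᵏ nᵏ` remaining placements every used point carries at least two arguments.

If the arguments of `f` and `g` are perfectly matched by a permutation `π`, the moment is
`∫ f (g ∘ π) dP_nᵏ`; there are `n (n - 1) ⋯ (n - k + 1)` such placements for each `π`, and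
`(n / a_n)ᵏ P_nᵏ` converges to `μᵏ` by dominated convergence of the densities. Otherwise some
argument of `g` is independent of `f`, and Cauchy–Schwarz, with `g` truncated in that argument to a
set of finite measure, shows that the moment is `o((a_n / n)ᵏ)`.
-/

section ProductMeasures

variable {ι E : Type*} [Fintype ι] [MeasurableSpace E]

lemma lintegral_fin_prod_eq_prod {k : ℕ} {E : Fin k → Type*} [∀ i, MeasurableSpace (E i)]
    (μ : ∀ i, Measure (E i)) [∀ i, SigmaFinite (μ i)] (f : ∀ i, E i → ℝ≥0∞)
    (hf : ∀ i, Measurable (f i)) :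
    ∫⁻ u, ∏ i, f i (u i) ∂(Measure.pi μ) = ∏ i, ∫⁻ x, f i x ∂(μ i) := by
  induction k with
  | zero => simp
  | succ k ih =>
    have tail_measurable : Measurable fun u : ∀ i : Fin k, E i.succ => ∏ i, f i.succ (u i) :=
      Finset.measurable_prod _ fun i _ => (hf _).comp (measurable_pi_apply i)
    rw [← ((measurePreserving_piFinSuccAbove μ 0).symm).lintegral_comp_emb
      (MeasurableEquiv.measurableEmbedding _)]
    simp only [MeasurableEquiv.piFinSuccAbove_symm_apply, Fin.insertNthEquiv, Fin.prod_univ_succ,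
      Fin.insertNth_zero, Equiv.coe_fn_mk, Fin.cons_succ, Fin.cons_zero,
      ← ih _ _ fun i => hf i.succ]
    exact lintegral_prod_mul (ν := Measure.pi fun i : Fin k => μ i.succ) (hf 0).aemeasurable
      tail_measurable.aemeasurable

lemma lintegral_fintype_prod_eq_prod {E : ι → Type*} [∀ i, MeasurableSpace (E i)]
    (μ : ∀ i, Measure (E i)) [∀ i, SigmaFinite (μ i)] (f : ∀ i, E i → ℝ≥0∞)
    (hf : ∀ i, Measurable (f i)) :
    ∫⁻ u, ∏ i, f i (u i) ∂(Measure.pi μ) = ∏ i, ∫⁻ x, f i x ∂(μ i) := by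
  let e := (Fintype.equivFin ι).symm
  rw [← (measurePreserving_piCongrLeft μ e).lintegral_comp_emb
    (MeasurableEquiv.measurableEmbedding _)]
  simp only [← e.prod_comp, MeasurableEquiv.coe_piCongrLeft, Equiv.piCongrLeft_apply_apply]
  exact lintegral_fin_prod_eq_prod _ _ fun i => hf _

lemma pi_withDensity {E : ι → Type*} [∀ i, MeasurableSpace (E i)] (μ : ∀ i, Measure (E i))
    [∀ i, SigmaFinite (μ i)] {ρ : ∀ i, E i → ℝ≥0∞} (hρ : ∀ i, Measurable (ρ i))
    [∀ i, SigmaFinite ((μ i).withDensity (ρ i))] :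
    (Measure.pi fun i => (μ i).withDensity (ρ i)) =
      (Measure.pi μ).withDensity fun u => ∏ i, ρ i (u i) := by
  classical
  refine Measure.pi_eq fun s hs => ?_
  have indicator_box (u : ∀ i, E i) : (Set.univ.pi s).indicator (fun u => ∏ i, ρ i (u i)) u =
      ∏ i, (s i).indicator (ρ i) (u i) := by
    by_cases hu : ∀ i, u i ∈ s i
    · simp [Set.indicator, hu]
    · obtain ⟨i, hi⟩ := not_forall.mp hu
      rw [Set.indicator_of_notMem (by simpa using ⟨i, hi⟩),
        Finset.prod_eq_zero (Finset.mem_univ i) (Set.indicator_of_notMem hi (ρ i))]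
  rw [withDensity_apply _ (.univ_pi hs), ← lintegral_indicator (.univ_pi hs)]
  simp only [indicator_box]
  rw [lintegral_fintype_prod_eq_prod μ _ fun i => (hρ i).indicator (hs i)]
  simp only [lintegral_indicator (hs _), withDensity_apply _ (hs _)]

lemma pi_eq_withDensity_rnDeriv {ν μ : Measure E} [SigmaFinite μ] (h : ν ≤ μ) :
    (Measure.pi fun _ : ι => ν) =
      (Measure.pi fun _ : ι => μ).withDensity fun u => ∏ i, ν.rnDeriv μ (u i) := by
  have : SigmaFinite ν := Measure.sigmaFinite_of_le μ h
  have density := Measure.withDensity_rnDeriv_eq ν μ (Measure.absolutelyContinuous_of_le h)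
  have : SigmaFinite (μ.withDensity (ν.rnDeriv μ)) := by rwa [density]
  rw [← pi_withDensity _ fun _ => Measure.measurable_rnDeriv ν μ, density]

lemma ae_forall_eval {μ : Measure E} [SigmaFinite μ] {p : E → Prop} (h : ∀ᵐ x ∂μ, p x) :
    ∀ᵐ u ∂(Measure.pi fun _ : ι => μ), ∀ i, p (u i) :=
  ae_all_iff.mpr fun i => (Measure.quasiMeasurePreserving_eval (fun _ => μ) i).ae h

lemma ae_prod_rnDeriv_le_one {ν μ : Measure E} [SigmaFinite μ] (h : ν ≤ μ) :
    ∀ᵐ u ∂(Measure.pi fun _ : ι => μ), ∏ i, ν.rnDeriv μ (u i) ≤ 1 := by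
  filter_upwards [ae_forall_eval (Measure.rnDeriv_le_one_of_le h)] with u hu
  exact Finset.prod_le_one' fun i _ => hu i

lemma pi_mono_measure {ν μ : Measure E} [SigmaFinite μ] (h : ν ≤ μ) :
    (Measure.pi fun _ : ι => ν) ≤ Measure.pi fun _ : ι => μ := by
  rw [pi_eq_withDensity_rnDeriv h]
  exact (withDensity_mono (ae_prod_rnDeriv_le_one h)).trans_eq withDensity_one

lemma pi_smul_measure (P : Measure E) [SigmaFinite P] (c : ℝ≥0) :
    (Measure.pi fun _ : ι => c • P) = c ^ Fintype.card ι • Measure.pi fun _ : ι => P :=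
  Measure.pi_eq fun s _ => by
    simp only [Measure.coe_nnreal_smul_apply, Measure.pi_pi, Finset.prod_mul_distrib,
      Finset.prod_const, Finset.card_univ, ENNReal.coe_pow]

lemma pi_le_smul_pi {P μ : Measure E} [SigmaFinite μ] {c : ℝ≥0} (h : P ≤ c • μ) :
    (Measure.pi fun _ : ι => P) ≤ c ^ Fintype.card ι • Measure.pi fun _ : ι => μ :=
  (pi_mono_measure h).trans_eq (pi_smul_measure μ c)

lemma ae_tendsto_rnDeriv_one {μ : Measure E} [SigmaFinite μ] {ν : ℕ → Measure E}
    (hmono : Monotone ν)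
    (hlim : ∀ B, MeasurableSet B → Tendsto (fun n => ν n B) atTop (𝓝 (μ B))) (hle : ∀ n, ν n ≤ μ) :
    ∀ᵐ x ∂μ, Tendsto (fun n => (ν n).rnDeriv μ x) atTop (𝓝 1) := by
  have setLIntegral_rnDeriv (n : ℕ) (s : Set E) : ∫⁻ x in s, (ν n).rnDeriv μ x ∂μ = ν n s :=
    have := Measure.sigmaFinite_of_le μ (hle n)
    Measure.setLIntegral_rnDeriv (Measure.absolutelyContinuous_of_le (hle n)) s
  have rnDeriv_mono : ∀ᵐ x ∂μ, Monotone fun n => (ν n).rnDeriv μ x := by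
    have step (n : ℕ) : ∀ᵐ x ∂μ, (ν n).rnDeriv μ x ≤ (ν (n + 1)).rnDeriv μ x := by
      refine ae_le_of_forall_setLIntegral_le_of_sigmaFinite (Measure.measurable_rnDeriv _ _) ?_
      intro s _ _
      simpa only [setLIntegral_rnDeriv] using hmono n.le_succ s
    filter_upwards [ae_all_iff.mpr step] with x hx using monotone_nat_of_le_succ hx
  have iSup_rnDeriv : (fun x => ⨆ n, (ν n).rnDeriv μ x) =ᵐ[μ] fun _ => 1 := by
    refine ae_eq_of_forall_setLIntegral_eq_of_sigmaFinite (by fun_prop) (by fun_prop) ?_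
    intro s hs _
    rw [lintegral_iSup' (fun n => by fun_prop) (ae_restrict_of_ae rnDeriv_mono)]
    simp only [setLIntegral_rnDeriv, lintegral_one, Measure.restrict_apply_univ]
    exact tendsto_nhds_unique (tendsto_atTop_iSup fun m n h => hmono h s) (hlim s hs)
  filter_upwards [rnDeriv_mono, iSup_rnDeriv] with x hx hsup
  exact hsup ▸ tendsto_atTop_iSup hx

lemma le_of_monotone_of_tendsto {μ : Measure E} {ν : ℕ → Measure E} (hmono : Monotone ν)
    (hlim : ∀ B, MeasurableSet B → Tendsto (fun n => ν n B) atTop (𝓝 (μ B))) (n : ℕ) : ν n ≤ μ :=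
  Measure.le_intro fun B hB _ =>
    Monotone.ge_of_tendsto (f := fun n => ν n B) (fun _ _ h => hmono h B) (hlim B hB) n

lemma tendsto_integral_pi_of_monotone {μ : Measure E} [SigmaFinite μ] {ν : ℕ → Measure E}
    (hmono : Monotone ν)
    (hlim : ∀ B, MeasurableSet B → Tendsto (fun n => ν n B) atTop (𝓝 (μ B)))
    {φ : (ι → E) → ℝ} (hφ : Integrable φ (Measure.pi fun _ : ι => μ)) :
    Tendsto (fun n => ∫ u, φ u ∂(Measure.pi fun _ : ι => ν n)) atTop
      (𝓝 (∫ u, φ u ∂(Measure.pi fun _ : ι => μ))) := by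
  have hle := le_of_monotone_of_tendsto hmono hlim
  let density (n : ℕ) (u : ι → E) : ℝ≥0∞ := ∏ i, (ν n).rnDeriv μ (u i)
  have density_measurable (n : ℕ) : Measurable (density n) := by fun_prop
  have integral_eq (n : ℕ) : ∫ u, φ u ∂(Measure.pi fun _ : ι => ν n) =
      ∫ u, (density n u).toReal • φ u ∂(Measure.pi fun _ : ι => μ) := by
    rw [pi_eq_withDensity_rnDeriv (hle n)]
    refine integral_withDensity_eq_integral_toReal_smul (density_measurable n) ?_ φ
    filter_upwards [ae_prod_rnDeriv_le_one (hle n)] with u hu using hu.trans_lt ENNReal.one_lt_top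
  simp only [integral_eq]
  refine tendsto_integral_of_dominated_convergence (fun u => ‖φ u‖)
    (fun n => (density_measurable n).ennreal_toReal.aestronglyMeasurable.smul hφ.1) hφ.norm ?_ ?_
  · intro n
    filter_upwards [ae_prod_rnDeriv_le_one (hle n)] with u hu
    rw [norm_smul, Real.norm_of_nonneg ENNReal.toReal_nonneg]
    exact mul_le_of_le_one_left (norm_nonneg _) (ENNReal.toReal_mono ENNReal.one_ne_top hu)
  · filter_upwards [ae_forall_eval (ae_tendsto_rnDeriv_one hmono hlim hle)] with u hu
    have density_tendsto : Tendsto (fun n => density n u) atTop (𝓝 1) := by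
      simpa using ENNReal.tendsto_finsetProd_of_ne_top Finset.univ (fun i _ => hu i)
        fun _ _ => ENNReal.one_ne_top
    simpa using ((ENNReal.tendsto_toReal ENNReal.one_ne_top).comp density_tendsto).smul_const (φ u)

end ProductMeasures

section Subsampling

variable {ι J E : Type*} [MeasurableSpace E]

lemma measurable_comp_right (α : ι → J) : Measurable fun w : J → E => w ∘ α :=
  measurable_pi_lambda _ fun i => measurable_pi_apply (α i)

lemma coe_piCongrLeft_symm_eq_comp (σ : Equiv.Perm ι) :
    ⇑(MeasurableEquiv.piCongrLeft (fun _ : ι => E) σ.symm) = fun u => u ∘ σ := by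
  ext u i
  obtain ⟨i, rfl⟩ := σ.symm.surjective i
  simp [MeasurableEquiv.piCongrLeft, Equiv.piCongrLeft]

variable [Fintype J]

lemma iIndepFun_eval_pi (P : Measure E) [IsProbabilityMeasure P] :
    iIndepFun (fun (j : J) (w : J → E) => w j) (Measure.pi fun _ => P) :=
  iIndepFun_pi (X := fun _ x => x) fun _ => aemeasurable_id

lemma indepFun_comp_eval (P : Measure E) [IsProbabilityMeasure P] {α : ι → J} {j : J}
    (hj : j ∉ Set.range α) :
    IndepFun (fun w : J → E => w ∘ α) (fun w => w j) (Measure.pi fun _ => P) := by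
  classical
  have disjoint : Disjoint (Set.range α).toFinset {j} := by simpa using hj
  exact ((iIndepFun_eval_pi P).indepFun_finset _ _ disjoint measurable_pi_apply).comp
    (φ := fun z i => z ⟨α i, Set.mem_toFinset.mpr ⟨i, rfl⟩⟩)
    (ψ := fun z => z ⟨j, Finset.mem_singleton_self j⟩)
    (measurable_pi_lambda _ fun i => measurable_pi_apply _)
    (measurable_pi_apply (X := fun _ : ({j} : Finset J) => E) _)

variable [Fintype ι]

lemma measurePreserving_comp_perm (μ : Measure E) [SigmaFinite μ] (σ : Equiv.Perm ι) :
    MeasurePreserving (fun u : ι → E => u ∘ σ) (Measure.pi fun _ => μ) (Measure.pi fun _ => μ) :=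
  coe_piCongrLeft_symm_eq_comp (E := E) σ ▸ measurePreserving_piCongrLeft (fun _ => μ) σ.symm

lemma integral_comp_perm (μ : Measure E) [SigmaFinite μ] (σ : Equiv.Perm ι) (φ : (ι → E) → ℝ) :
    ∫ u, φ (u ∘ σ) ∂(Measure.pi fun _ : ι => μ) = ∫ u, φ u ∂(Measure.pi fun _ : ι => μ) :=
  (measurePreserving_comp_perm μ σ).integral_comp (coe_piCongrLeft_symm_eq_comp (E := E) σ ▸
    (MeasurableEquiv.piCongrLeft (fun _ => E) σ.symm).measurableEmbedding) φ

lemma measurePreserving_comp_of_injective (P : Measure E) [IsProbabilityMeasure P] {α : ι → J}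
    (hα : Function.Injective α) :
    MeasurePreserving (fun w : J → E => w ∘ α) (Measure.pi fun _ => P) (Measure.pi fun _ => P) := by
  refine ⟨measurable_comp_right α, ?_⟩
  have indep := (iIndepFun_eval_pi (J := J) P).precomp hα
  rw [iIndepFun_iff_map_fun_eq_pi_map fun i => (measurable_pi_apply _).aemeasurable] at indep
  simp only [(measurePreserving_eval (fun _ : J => P) _).map_eq] at indep
  exact indep

lemma eLpNorm_comp_of_injective (P : Measure E) [IsProbabilityMeasure P] {α : ι → J}
    (hα : Function.Injective α) {F : (ι → E) → ℝ} (p : ℝ≥0∞)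
    (hF : AEStronglyMeasurable F (Measure.pi fun _ => P)) :
    eLpNorm (fun w : J → E => F (w ∘ α)) p (Measure.pi fun _ => P) =
      eLpNorm F p (Measure.pi fun _ => P) :=
  eLpNorm_comp_measurePreserving hF (measurePreserving_comp_of_injective P hα)

lemma map_comp_restrict_eval (P : Measure E) [IsProbabilityMeasure P] {α : ι → J}
    (hα : Function.Injective α) {j : J} (hj : j ∉ Set.range α) {A : Set E} (hA : MeasurableSet A) :
    ((Measure.pi fun _ : J => P).restrict {w | w j ∈ A}).map (fun w => w ∘ α) =
      P A • Measure.pi fun _ : ι => P := by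
  ext B hB
  rw [Measure.map_apply (measurable_comp_right α) hB,
    Measure.restrict_apply (measurable_comp_right α hB), Measure.smul_apply, smul_eq_mul, mul_comm,
    ← (measurePreserving_comp_of_injective P hα).measure_preimage hB.nullMeasurableSet,
    ← (measurePreserving_eval (fun _ : J => P) j).measure_preimage hA.nullMeasurableSet]
  exact (indepFun_comp_eval P hj).measure_inter_preimage_eq_mul B A hB hA

lemma enorm_integral_mul_le {X : Type*} [MeasurableSpace X] {ν : Measure X} {f g : X → ℝ}
    (hf : AEStronglyMeasurable f ν) (hg : AEStronglyMeasurable g ν) :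
    ‖∫ x, f x * g x ∂ν‖ₑ ≤ eLpNorm f 2 ν * eLpNorm g 2 ν := by
  refine (enorm_integral_le_lintegral_enorm _).trans ?_
  have holder := eLpNorm_smul_le_mul_eLpNorm (p := 2) (q := 2) (r := 1) hg hf
  rwa [eLpNorm_one_eq_lintegral_enorm] at holder

lemma eLpNorm_two_indicator_eval_comp (P : Measure E) [IsProbabilityMeasure P] {α : ι → J}
    (hα : Function.Injective α) {j : J} (hj : j ∉ Set.range α) {A : Set E} (hA : MeasurableSet A)
    {F : (ι → E) → ℝ} (hF : AEStronglyMeasurable F (Measure.pi fun _ => P)) :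
    eLpNorm ({w : J → E | w j ∈ A}.indicator fun w => F (w ∘ α)) 2 (Measure.pi fun _ => P) =
      P A ^ (1 / 2 : ℝ) * eLpNorm F 2 (Measure.pi fun _ => P) := by
  have law := map_comp_restrict_eval P hα hj hA
  have event : MeasurableSet {w : J → E | w j ∈ A} := measurable_pi_apply j hA
  rw [eLpNorm_indicator_eq_eLpNorm_restrict event]
  calc eLpNorm (F ∘ fun w : J → E => w ∘ α) 2 ((Measure.pi fun _ => P).restrict {w | w j ∈ A})
    _ = eLpNorm F 2 (P A • Measure.pi fun _ : ι => P) := by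
        rw [← law, eLpNorm_map_measure (law ▸ hF.smul_measure _)
          (measurable_comp_right α).aemeasurable]
    _ = P A ^ (1 / 2 : ℝ) * eLpNorm F 2 (Measure.pi fun _ => P) := by
        rw [eLpNorm_smul_measure_of_ne_top (by simp)]; simp

lemma enorm_integral_comp_mul_comp_le (P : Measure E) [IsProbabilityMeasure P] {α β : ι → J}
    (hα : Function.Injective α) (hβ : Function.Injective β) {i : ι} (hi : β i ∉ Set.range α)
    {A : Set E} (hA : MeasurableSet A) {F G : (ι → E) → ℝ}
    (hF : MemLp F 2 (Measure.pi fun _ => P)) (hG : MemLp G 2 (Measure.pi fun _ => P)) :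
    ‖∫ w, F (w ∘ α) * G (w ∘ β) ∂(Measure.pi fun _ : J => P)‖ₑ ≤
      eLpNorm F 2 (Measure.pi fun _ => P) *
        (P A ^ (1 / 2 : ℝ) * eLpNorm G 2 (Measure.pi fun _ => P) +
          eLpNorm ({u | u i ∉ A}.indicator G) 2 (Measure.pi fun _ => P)) := by
  have mpα := measurePreserving_comp_of_injective P hα
  have mpβ := measurePreserving_comp_of_injective P hβ
  have eventA : MeasurableSet {u : ι → E | u i ∉ A} := (measurable_pi_apply i hA).compl
  let FA (w : J → E) : ℝ := {w : J → E | w (β i) ∈ A}.indicator (fun w => F (w ∘ α)) w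
  let GAc : (ι → E) → ℝ := {u | u i ∉ A}.indicator G
  have Fα : MemLp (fun w : J → E => F (w ∘ α)) 2 (Measure.pi fun _ => P) :=
    hF.comp_measurePreserving mpα
  have Gβ : MemLp (fun w : J → E => G (w ∘ β)) 2 (Measure.pi fun _ => P) :=
    hG.comp_measurePreserving mpβ
  have FAα : MemLp FA 2 (Measure.pi fun _ => P) := Fα.indicator (measurable_pi_apply (β i) hA)
  have GAcβ : MemLp (fun w : J → E => GAc (w ∘ β)) 2 (Measure.pi fun _ => P) :=
    (hG.indicator eventA).comp_measurePreserving mpβ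
  have split (w : J → E) :
      F (w ∘ α) * G (w ∘ β) = FA w * G (w ∘ β) + F (w ∘ α) * GAc (w ∘ β) := by
    by_cases h : w (β i) ∈ A <;> simp [FA, GAc, h]
  have integral_split : ∫ w, F (w ∘ α) * G (w ∘ β) ∂(Measure.pi fun _ : J => P) =
      ∫ w, FA w * G (w ∘ β) ∂(Measure.pi fun _ => P) +
        ∫ w, F (w ∘ α) * GAc (w ∘ β) ∂(Measure.pi fun _ => P) := by
    simp only [split]
    exact integral_add (FAα.integrable_mul Gβ) (Fα.integrable_mul GAcβ)
  rw [integral_split]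
  refine (enorm_add_le _ _).trans ((add_le_add (enorm_integral_mul_le FAα.1 Gβ.1)
    (enorm_integral_mul_le Fα.1 GAcβ.1)).trans_eq ?_)
  rw [eLpNorm_two_indicator_eval_comp P hα hi hA hF.1,
    eLpNorm_comp_of_injective P hβ 2 hG.1, eLpNorm_comp_of_injective P hα 2 hF.1,
    eLpNorm_comp_of_injective P hβ 2 (hG.indicator eventA).1]
  ring

lemma eLpNorm_two_pi_le {P μ : Measure E} [SigmaFinite μ] {c : ℝ≥0} (h : P ≤ c • μ)
    (F : (ι → E) → ℝ) :
    eLpNorm F 2 (Measure.pi fun _ => P) ≤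
      ((c : ℝ≥0∞) ^ Fintype.card ι) ^ (1 / 2 : ℝ) * eLpNorm F 2 (Measure.pi fun _ => μ) := by
  refine (eLpNorm_mono_measure F (pi_le_smul_pi h)).trans_eq ?_
  calc eLpNorm F 2 ((c ^ Fintype.card ι : ℝ≥0) • Measure.pi fun _ => μ)
    _ = (c ^ Fintype.card ι : ℝ≥0) ^ (1 / 2 : ℝ≥0∞).toReal * eLpNorm F 2 (Measure.pi fun _ => μ) :=
        eLpNorm_smul_measure_of_ne_top ENNReal.ofNat_ne_top F _
    _ = _ := by simp

lemma tendsto_eLpNorm_indicator_zero {X : Type*} [MeasurableSpace X] {ν : Measure X} {p : ℝ≥0∞}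
    (hp : p ≠ ∞) {f : X → ℝ} (hf : MemLp f p ν) {s : ℕ → Set X} (hs : ∀ m, MeasurableSet (s m))
    (hs_lim : ∀ x, ∀ᶠ m in atTop, x ∉ s m) :
    Tendsto (fun m => eLpNorm ((s m).indicator f) p ν) atTop (𝓝 0) := by
  rcases eq_or_ne p 0 with rfl | hp0
  · simp
  have p_pos : 0 < p.toReal := ENNReal.toReal_pos hp0 hp
  simp only [eLpNorm_eq_lintegral_rpow_enorm_toReal hp0 hp]
  suffices lintegral_tendsto : Tendsto (fun m => ∫⁻ x, ‖(s m).indicator f x‖ₑ ^ p.toReal ∂ν) atTop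
      (𝓝 (∫⁻ _, 0 ∂ν)) by
    rw [lintegral_zero] at lintegral_tendsto
    simpa [p_pos] using lintegral_tendsto.ennrpow_const (1 / p.toReal)
  refine tendsto_lintegral_of_dominated_convergence' (fun x => ‖f x‖ₑ ^ p.toReal)
    (fun m => (hf.1.indicator (hs m)).enorm.pow_const _) (fun m => ?_)
    (lintegral_rpow_enorm_lt_top_of_eLpNorm_lt_top hp0 hp hf.2).ne ?_
  · filter_upwards with x
    gcongr
    exact enorm_indicator_le_enorm_self _ _
  · filter_upwards with x
    refine tendsto_const_nhds.congr' ?_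
    filter_upwards [hs_lim x] with m hm
    simp [hm, p_pos]

lemma tendsto_eLpNorm_indicator_eval_spanningSets (μ : Measure E) [SigmaFinite μ]
    {G : (ι → E) → ℝ} (hG : MemLp G 2 (Measure.pi fun _ => μ)) (i : ι) :
    Tendsto (fun m => eLpNorm ({u | u i ∉ spanningSets μ m}.indicator G) 2
      (Measure.pi fun _ => μ)) atTop (𝓝 0) := by
  have event (m : ℕ) : MeasurableSet {u : ι → E | u i ∉ spanningSets μ m} :=
    (measurableSet_spanningSets μ m).compl.preimage (measurable_pi_apply i)
  refine tendsto_eLpNorm_indicator_zero (by simp) hG event fun u => ?_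
  filter_upwards [eventually_ge_atTop (spanningSetsIndex μ (u i))] with m hm
  simpa using mem_spanningSets_of_index_le μ _ hm

end Subsampling

section CrossMoment

variable {ι J E : Type*}

/-- The arguments of two kernels in `ι` variables each, placed at sites of `J` by `L`, are in
perfect matching: the arguments of the first kernel are at distinct sites, and argument `i` of the
second kernel shares its site with argument `π i` of the first. -/
def IsMatched (L : ι ⊕ ι → J) (π : Equiv.Perm ι) : Prop :=
  Function.Injective (L ∘ Sum.inl) ∧ L ∘ Sum.inr = L ∘ Sum.inl ∘ π

lemma IsMatched.unique {L : ι ⊕ ι → J} {π π' : Equiv.Perm ι} (h : IsMatched L π)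
    (h' : IsMatched L π') : π = π' :=
  Equiv.ext fun i => h.1 (congrFun (h.2.symm.trans h'.2) i)

lemma isMatched_comp_iff {J' : Type*} {φ : J → J'} (hφ : Function.Injective φ) {L : ι ⊕ ι → J}
    {π : Equiv.Perm ι} : IsMatched (φ ∘ L) π ↔ IsMatched L π := by
  refine and_congr (hφ.of_comp_iff (L ∘ Sum.inl)) ⟨fun h => ?_, fun h => congrArg (φ ∘ ·) h⟩
  exact funext fun i => hφ (congrFun h i)

lemma exists_inr_notMem_range_of_forall_not_isMatched [Finite ι] {L : ι ⊕ ι → J}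
    (hr : Function.Injective (L ∘ Sum.inr)) (hl : Function.Injective (L ∘ Sum.inl))
    (h : ∀ π, ¬ IsMatched L π) : ∃ i, (L ∘ Sum.inr) i ∉ Set.range (L ∘ Sum.inl) := by
  by_contra! hrange
  choose π hπ using hrange
  have π_injective : Function.Injective π := fun i j hij =>
    hr (by rw [← hπ i, ← hπ j, hij])
  exact h (.ofBijective π (Finite.injective_iff_bijective.mp π_injective)) ⟨hl, (funext hπ).symm⟩

variable [Fintype J] [MeasurableSpace E]

/-- The mixed moment `𝔼[F(ξ_{L(inl ·)}) G(ξ_{L(inr ·)})]` of two kernels evaluated at points of an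
i.i.d. family `(ξ_j)_{j ∈ J}` of law `P`. -/
noncomputable def crossMoment (P : Measure E) (F G : (ι → E) → ℝ) (L : ι ⊕ ι → J) : ℝ :=
  ∫ w : J → E, F (w ∘ L ∘ Sum.inl) * G (w ∘ L ∘ Sum.inr) ∂(Measure.pi fun _ => P)

variable {P : Measure E} {F G : (ι → E) → ℝ}

lemma crossMoment_eq_zero (hF0 : Function.support F ⊆ {u | Function.Injective u})
    (hG0 : Function.support G ⊆ {u | Function.Injective u}) {L : ι ⊕ ι → J}
    (h : ¬ (Function.Injective (L ∘ Sum.inr) ∧ Function.Injective (L ∘ Sum.inl))) :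
    crossMoment P F G L = 0 := by
  refine integral_eq_zero_of_ae (.of_forall fun w => ?_)
  by_contra hw
  exact h ⟨(hG0 (right_ne_zero_of_mul hw)).of_comp, (hF0 (left_ne_zero_of_mul hw)).of_comp⟩

lemma crossMoment_perm_comp [IsProbabilityMeasure P] (τ : Equiv.Perm J) (L : ι ⊕ ι → J) :
    crossMoment P F G (τ ∘ L) = crossMoment P F G L :=
  integral_comp_perm P τ fun w => F (w ∘ L ∘ Sum.inl) * G (w ∘ L ∘ Sum.inr)

variable [Fintype ι]

lemma crossMoment_of_isMatched [IsProbabilityMeasure P]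
    (hF : AEStronglyMeasurable F (Measure.pi fun _ => P))
    (hG : AEStronglyMeasurable G (Measure.pi fun _ => P)) {L : ι ⊕ ι → J} {π : Equiv.Perm ι}
    (h : IsMatched L π) :
    crossMoment P F G L = ∫ u, F u * G (u ∘ π) ∂(Measure.pi fun _ => P) := by
  have law := measurePreserving_comp_of_injective P h.1
  have product_measurable :
      AEStronglyMeasurable (fun u => F u * G (u ∘ π)) (Measure.pi fun _ => P) :=
    hF.mul (hG.comp_measurePreserving (measurePreserving_comp_perm P π))
  rw [crossMoment, h.2, ← law.map_eq,
    integral_map law.aemeasurable (law.map_eq ▸ product_measurable)]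
  rfl

lemma exists_enorm_crossMoment_le [IsProbabilityMeasure P] {μ : Measure E} [SigmaFinite μ]
    {c : ℝ≥0} (hP : P ≤ c • μ) (hF : MemLp F 2 (Measure.pi fun _ => μ))
    (hG : MemLp G 2 (Measure.pi fun _ => μ)) {A : Set E} (hA : MeasurableSet A)
    {L : ι ⊕ ι → J} (hr : Function.Injective (L ∘ Sum.inr))
    (hl : Function.Injective (L ∘ Sum.inl)) (h : ∀ π, ¬ IsMatched L π) :
    ∃ i, ‖crossMoment P F G L‖ₑ ≤ c ^ Fintype.card ι * (eLpNorm F 2 (Measure.pi fun _ => μ) *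
      ((c * μ A) ^ (1 / 2 : ℝ) * eLpNorm G 2 (Measure.pi fun _ => μ) +
        eLpNorm ({u | u i ∉ A}.indicator G) 2 (Measure.pi fun _ => μ))) := by
  obtain ⟨i, hi⟩ := exists_inr_notMem_range_of_forall_not_isMatched hr hl h
  have memLp_of_le {H : (ι → E) → ℝ} (hH : MemLp H 2 (Measure.pi fun _ => μ)) :
      MemLp H 2 (Measure.pi fun _ => P) :=
    hH.of_measure_le_smul ENNReal.coe_ne_top (pi_le_smul_pi hP)
  let s : ℝ≥0∞ := ((c : ℝ≥0∞) ^ Fintype.card ι) ^ (1 / 2 : ℝ)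
  have s_mul_s : s * s = c ^ Fintype.card ι := by
    rw [← ENNReal.rpow_add_of_nonneg _ _ (by norm_num) (by norm_num)]
    norm_num
  refine ⟨i, (enorm_integral_comp_mul_comp_le P hl hr hi hA (memLp_of_le hF)
    (memLp_of_le hG)).trans ?_⟩
  calc _ ≤ s * eLpNorm F 2 (Measure.pi fun _ => μ) *
        ((c * μ A) ^ (1 / 2 : ℝ) * (s * eLpNorm G 2 (Measure.pi fun _ => μ)) +
          s * eLpNorm ({u | u i ∉ A}.indicator G) 2 (Measure.pi fun _ => μ)) := by
        gcongr
        · exact eLpNorm_two_pi_le hP F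
        · exact hP A
        · exact eLpNorm_two_pi_le hP G
        · exact eLpNorm_two_pi_le hP _
    _ = _ := by rw [← s_mul_s]; ring

lemma eventually_enorm_crossMoment_le {μ : Measure E} [SigmaFinite μ] {P : ℕ → Measure E}
    [∀ n, IsProbabilityMeasure (P n)] {c : ℕ → ℝ≥0} (hP : ∀ᶠ n in atTop, P n ≤ c n • μ)
    (hc : Tendsto c atTop (𝓝 0)) (hF : MemLp F 2 (Measure.pi fun _ => μ))
    (hG : MemLp G 2 (Measure.pi fun _ => μ))
    (hF0 : Function.support F ⊆ {u | Function.Injective u})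
    (hG0 : Function.support G ⊆ {u | Function.Injective u}) {δ : ℝ≥0∞} (hδ : δ ≠ 0) :
    ∀ᶠ n in atTop, ∀ (κ : Type*) [Fintype κ] (L : ι ⊕ ι → κ), (∀ π, ¬ IsMatched L π) →
      ‖crossMoment (P n) F G L‖ₑ ≤ c n ^ Fintype.card ι * δ := by
  let normF := eLpNorm F 2 (Measure.pi fun _ => μ)
  let normG := eLpNorm G 2 (Measure.pi fun _ => μ)
  have half_pos : 0 < δ / 2 := ENNReal.half_pos hδ
  obtain ⟨m, tail_lt⟩ : ∃ m, ∀ i, normF *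
      eLpNorm ({u | u i ∉ spanningSets μ m}.indicator G) 2 (Measure.pi fun _ => μ) < δ / 2 := by
    refine (eventually_all (l := atTop).mpr fun i => ?_).exists
    have tail_tendsto := ENNReal.Tendsto.const_mul
      (tendsto_eLpNorm_indicator_eval_spanningSets μ hG i) (.inr hF.2.ne)
    rw [mul_zero] at tail_tendsto
    exact tail_tendsto.eventually_lt_const half_pos
  have core_tendsto : Tendsto (fun n => normF *
      ((c n * μ (spanningSets μ m)) ^ (1 / 2 : ℝ) * normG)) atTop (𝓝 0) := by
    have scaled : Tendsto (fun n => (c n : ℝ≥0∞) * μ (spanningSets μ m)) atTop (𝓝 0) := by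
      simpa using ENNReal.Tendsto.mul_const (ENNReal.tendsto_coe.mpr hc)
        (.inr (measure_spanningSets_lt_top μ m).ne)
    simpa using ENNReal.Tendsto.const_mul (ENNReal.Tendsto.mul_const
      (scaled.ennrpow_const (1 / 2)) (.inr hG.2.ne)) (.inr hF.2.ne)
  filter_upwards [hP, core_tendsto.eventually_lt_const half_pos] with n hPn core_lt κ _ L hL
  by_cases hinj : Function.Injective (L ∘ Sum.inr) ∧ Function.Injective (L ∘ Sum.inl)
  · obtain ⟨i, hi⟩ := exists_enorm_crossMoment_le hPn hF hG (measurableSet_spanningSets μ m)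
      hinj.1 hinj.2 hL
    refine hi.trans ?_
    gcongr
    rw [mul_add, ← ENNReal.add_halves δ]
    exact add_le_add core_lt.le (tail_lt i).le
  · simp [crossMoment_eq_zero hF0 hG0 hinj]

end CrossMoment

section SignedPlacements

variable {S κ : Type*}

/-- The sign `(-1) ^ #{s | ε s = false}` with which the term indexed by `ε` enters the multilinear
expansion of a product of differences. -/
def boolSign [Fintype S] (ε : S → Bool) : ℝ :=
  ∏ s, if ε s then 1 else -1

/-- The site of each argument in the sample `κ` enlarged by one private extra point per argument:
argument `s` is placed at the sample point `h s` if `ε s`, and at its private point otherwise. -/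
def position (h : S → κ) (ε : S → Bool) (s : S) : κ ⊕ S :=
  if ε s then .inl (h s) else .inr s

lemma position_eq_inr_iff {h : S → κ} {ε : S → Bool} {s t : S} :
    position h ε t = .inr s ↔ t = s ∧ ε t = false := by
  cases ht : ε t <;> simp [position, ht]

lemma position_update_not [DecidableEq S] [DecidableEq κ] {h : S → κ} {s : S}
    (hs : ∀ t ≠ s, h t ≠ h s) (ε : S → Bool) :
    position h (Function.update ε s (!ε s)) =
      Equiv.swap (.inl (h s)) (.inr s) ∘ position h ε := by
  funext t
  obtain rfl | hts := eq_or_ne t s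
  · cases ht : ε t <;> simp [position, ht]
  · have hinl : position h ε t ≠ .inl (h s) := by
      cases ht : ε t <;> simp [position, ht, hs t hts]
    have hinr : position h ε t ≠ .inr s := fun h => hts (position_eq_inr_iff.mp h).1
    rw [Function.comp_apply, Equiv.swap_apply_of_ne_of_ne hinl hinr]
    simp [position, hts]

variable [Fintype S]

lemma boolSign_eq_neg_one_pow (ε : S → Bool) :
    boolSign ε = (-1) ^ (Finset.univ.filter fun s => ε s = false).card := by
  simp [boolSign, Finset.prod_ite]

lemma abs_boolSign (ε : S → Bool) : |boolSign ε| = 1 := by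
  simp [boolSign_eq_neg_one_pow]

lemma boolSign_eq_mul {T : Type*} [Fintype T] (ε : S ⊕ T → Bool) :
    boolSign ε = boolSign (ε ∘ Sum.inl) * boolSign (ε ∘ Sum.inr) :=
  Fintype.prod_sum_type _

lemma exists_comp_eq_of_card_image_le [DecidableEq κ] [Nonempty κ] {h : S → κ} {m : ℕ}
    (hm : (Finset.univ.image h).card ≤ m) :
    ∃ (q : S → Fin m) (v : Fin m → κ), v ∘ q = h := by
  obtain ⟨e⟩ : Nonempty (Finset.univ.image h ↪ Fin m) :=
    Function.Embedding.nonempty_of_card_le (by rwa [Fintype.card_coe, Fintype.card_fin])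
  let q (s : S) : Fin m := e ⟨h s, Finset.mem_image_of_mem h (Finset.mem_univ s)⟩
  have factors : h.FactorsThrough q := fun s t hst => by simpa using e.injective hst
  exact ⟨q, Function.extend q h fun _ => Classical.arbitrary κ, factors.extend_comp _⟩

lemma two_mul_card_image_le_card [DecidableEq κ] {h : S → κ} (hh : ∀ s, ∃ t ≠ s, h t = h s) :
    2 * (Finset.univ.image h).card ≤ Fintype.card S := by
  classical
  refine Finset.mul_card_image_le_card _ 2 fun b hb => ?_
  obtain ⟨s, -, rfl⟩ := Finset.mem_image.mp hb
  obtain ⟨t, hts, hth⟩ := hh s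
  rw [← Finset.card_pair hts]
  exact Finset.card_le_card fun x hx => by
    rcases Finset.mem_insert.mp hx with rfl | hx
    · simpa using hth
    · simp [Finset.mem_singleton.mp hx]

variable [DecidableEq S]

lemma boolSign_update_not (ε : S → Bool) (s : S) :
    boolSign (Function.update ε s (!ε s)) = -boolSign ε := by
  rw [boolSign, boolSign, ← Finset.mul_prod_erase _ _ (Finset.mem_univ s),
    ← Finset.mul_prod_erase _ _ (Finset.mem_univ s), ← neg_mul]
  congr 1
  · cases ε s <;> simp
  · refine Finset.prod_congr rfl fun t ht => ?_
    rw [Function.update_of_ne (Finset.ne_of_mem_erase ht)]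

lemma sum_boolSign_mul_eq_zero {r : (S → κ ⊕ S) → ℝ}
    (hr : ∀ (τ : Equiv.Perm (κ ⊕ S)) L, r (τ ∘ L) = r L) {h : S → κ} {s : S}
    (hs : ∀ t ≠ s, h t ≠ h s) : ∑ ε, boolSign ε * r (position h ε) = 0 := by
  classical
  refine Finset.sum_ninvolution (fun ε => Function.update ε s (!ε s)) (fun ε => ?_) (fun ε _ => ?_)
    (fun ε => Finset.mem_univ _) (fun ε => by simp)
  · rw [position_update_not hs, hr, boolSign_update_not]
    ring
  · exact fun hε => by simpa using congrFun hε s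

variable [Fintype κ]

lemma card_filter_forall_exists_ne_le [DecidableEq κ] [Nonempty κ] {m : ℕ}
    (hm : Fintype.card S ≤ 2 * m) :
    (Finset.univ.filter fun h : S → κ => ∀ s, ∃ t ≠ s, h t = h s).card ≤
      m ^ Fintype.card S * Fintype.card κ ^ m := by
  have subset_image : (Finset.univ.filter fun h : S → κ => ∀ s, ∃ t ≠ s, h t = h s) ⊆
      Finset.univ.image fun p : (S → Fin m) × (Fin m → κ) => p.2 ∘ p.1 := by
    intro h hh
    have := two_mul_card_image_le_card (Finset.mem_filter.mp hh).2
    obtain ⟨q, v, rfl⟩ := exists_comp_eq_of_card_image_le (h := h) (m := m) (by lia)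
    exact Finset.mem_image_of_mem _ (Finset.mem_univ (q, v))
  refine (Finset.card_le_card subset_image).trans (Finset.card_image_le.trans ?_)
  simp

lemma abs_sum_sum_boolSign_mul_le [Nonempty κ] {m : ℕ} (hm : Fintype.card S ≤ 2 * m)
    {r : (S → κ ⊕ S) → ℝ} (hr : ∀ (τ : Equiv.Perm (κ ⊕ S)) L, r (τ ∘ L) = r L) {η : ℝ}
    (hη : ∀ L, |r L| ≤ η) :
    |∑ h, ∑ ε, boolSign ε * r (position h ε)| ≤
      m ^ Fintype.card S * Fintype.card κ ^ m * (2 ^ Fintype.card S * η) := by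
  classical
  have η_nonneg : 0 ≤ η := (abs_nonneg _).trans (hη Sum.inr)
  have inner_le (h : S → κ) :
      |∑ ε, boolSign ε * r (position h ε)| ≤ 2 ^ Fintype.card S * η := by
    calc |∑ ε, boolSign ε * r (position h ε)|
        ≤ ∑ ε : S → Bool, |boolSign ε * r (position h ε)| := Finset.abs_sum_le_sum_abs _ _
      _ ≤ ∑ _ε : S → Bool, η := by
        gcongr
        rw [abs_mul, abs_boolSign, one_mul]
        exact hη _
      _ = 2 ^ Fintype.card S * η := by simp
  calc |∑ h, ∑ ε, boolSign ε * r (position h ε)|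
      = |∑ h with ∀ s, ∃ t ≠ s, h t = h s, ∑ ε, boolSign ε * r (position h ε)| := by
        congr 1
        refine (Finset.sum_filter_of_ne fun h _ hne => ?_).symm
        contrapose! hne
        obtain ⟨s, hs⟩ := hne
        exact sum_boolSign_mul_eq_zero hr hs
    _ ≤ ∑ h with ∀ s, ∃ t ≠ s, h t = h s, |∑ ε, boolSign ε * r (position h ε)| :=
        Finset.abs_sum_le_sum_abs _ _
    _ ≤ (Finset.univ.filter fun h : S → κ => ∀ s, ∃ t ≠ s, h t = h s).card •
          (2 ^ Fintype.card S * η) := Finset.sum_le_card_nsmul _ _ _ fun h _ => inner_le h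
    _ ≤ _ := by
        rw [nsmul_eq_mul]
        gcongr
        exact_mod_cast card_filter_forall_exists_ne_le hm

end SignedPlacements

section MatchedPlacements

variable {ι κ : Type*}

lemma isMatched_position_iff {h : ι ⊕ ι → κ} {ε : ι ⊕ ι → Bool} {π : Equiv.Perm ι} :
    IsMatched (position h ε) π ↔ ε = (fun _ => true) ∧ IsMatched h π := by
  refine ⟨fun hπ => ?_, ?_⟩
  · suffices hε : ε = fun _ => true by
      subst hε
      exact ⟨rfl, (isMatched_comp_iff Sum.inl_injective).mp hπ⟩
    -- A private point is the site of no other argument.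
    funext s
    by_contra hs
    have hs' : position h ε s = .inr s := position_eq_inr_iff.mpr ⟨rfl, by simpa using hs⟩
    rcases s with i | i
    · have partner : position h ε (.inr (π.symm i)) = position h ε (.inl i) := by
        simpa using congrFun hπ.2 (π.symm i)
      simpa using (position_eq_inr_iff.mp (partner.trans hs')).1
    · have partner : position h ε (.inl (π i)) = position h ε (.inr i) := (congrFun hπ.2 i).symm
      simpa using (position_eq_inr_iff.mp (partner.trans hs')).1
  · rintro ⟨rfl, hπ⟩
    exact (isMatched_comp_iff Sum.inl_injective).mpr hπ

/-- A matched placement is determined by the injective placement of the first kernel. -/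
def embeddingEquivIsMatched (π : Equiv.Perm ι) :
    (ι ↪ κ) ≃ {h : ι ⊕ ι → κ // IsMatched h π} where
  toFun j := ⟨Sum.elim j (j ∘ π), j.injective, rfl⟩
  invFun h := ⟨h.1 ∘ Sum.inl, h.2.1⟩
  left_inv _ := rfl
  right_inv h := Subtype.ext (by
    change Sum.elim (h.1 ∘ Sum.inl) (h.1 ∘ Sum.inl ∘ π) = h.1
    rw [← h.2.2, Sum.elim_comp_inl_inr])

variable [Fintype ι] [Fintype κ] [DecidableEq ι]

open scoped Classical in
lemma card_filter_isMatched (π : Equiv.Perm ι) :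
    (Finset.univ.filter fun h : ι ⊕ ι → κ => IsMatched h π).card =
      (Fintype.card κ).descFactorial (Fintype.card ι) := by
  rw [← Fintype.card_embedding_eq, Fintype.card_congr (embeddingEquivIsMatched π),
    Fintype.card_subtype]

open scoped Classical in
lemma sum_sum_boolSign_mul_sum_isMatched (M : Equiv.Perm ι → ℝ) :
    ∑ h : ι ⊕ ι → κ, ∑ ε : ι ⊕ ι → Bool,
        boolSign ε * ∑ π, (if IsMatched (position h ε) π then M π else 0) =
      (Fintype.card κ).descFactorial (Fintype.card ι) * ∑ π, M π := by
  have inner_eq (h : ι ⊕ ι → κ) : ∑ ε : ι ⊕ ι → Bool,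
      boolSign ε * ∑ π, (if IsMatched (position h ε) π then M π else 0) =
        ∑ π, if IsMatched h π then M π else 0 := by
    rw [Finset.sum_eq_single_of_mem (fun _ => true) (Finset.mem_univ _)]
    · simp [boolSign, isMatched_position_iff]
    · intro ε _ hε
      simp [isMatched_position_iff, hε]
  simp_rw [inner_eq]
  rw [Finset.sum_comm, Finset.mul_sum]
  refine Finset.sum_congr rfl fun π _ => ?_
  rw [← Finset.sum_filter, Finset.sum_const, card_filter_isMatched, nsmul_eq_mul]

lemma abs_sum_sum_boolSign_mul_sub_le [Nonempty κ] {q : (ι ⊕ ι → κ ⊕ (ι ⊕ ι)) → ℝ}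
    {M : Equiv.Perm ι → ℝ} {η : ℝ} (hq : ∀ (τ : Equiv.Perm (κ ⊕ (ι ⊕ ι))) L, q (τ ∘ L) = q L)
    (hM : ∀ L π, IsMatched L π → q L = M π) (hη : 0 ≤ η)
    (hqη : ∀ L, (∀ π, ¬ IsMatched L π) → |q L| ≤ η) :
    |(∑ h, ∑ ε, boolSign ε * q (position h ε)) -
        (Fintype.card κ).descFactorial (Fintype.card ι) * ∑ π, M π| ≤
      Fintype.card ι ^ Fintype.card (ι ⊕ ι) * Fintype.card κ ^ Fintype.card ι *
        (2 ^ Fintype.card (ι ⊕ ι) * η) := by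
  classical
  let r (L : ι ⊕ ι → κ ⊕ (ι ⊕ ι)) : ℝ := q L - ∑ π, if IsMatched L π then M π else 0
  have r_perm (τ : Equiv.Perm (κ ⊕ (ι ⊕ ι))) (L) : r (τ ∘ L) = r L := by
    simp only [r, hq, isMatched_comp_iff τ.injective]
  have abs_r_le (L) : |r L| ≤ η := by
    by_cases hL : ∃ π, IsMatched L π
    · obtain ⟨π, hπ⟩ := hL
      have only_π (π') : IsMatched L π' ↔ π' = π := ⟨fun h => h.unique hπ, fun h => h ▸ hπ⟩
      simpa [r, only_π, hM L π hπ] using hη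
    · push Not at hL
      simpa [r, hL] using hqη L hL
  rw [← sum_sum_boolSign_mul_sum_isMatched, ← Finset.sum_sub_distrib]
  simp only [← Finset.sum_sub_distrib, ← mul_sub]
  exact abs_sum_sum_boolSign_mul_le (by rw [Fintype.card_sum, two_mul]) r_perm abs_r_le

end MatchedPlacements

section Expansion

variable {ι κ E : Type*} [MeasurableSpace E]

lemma measurable_sumElim_comp (x : κ → E) (α : ι → κ ⊕ ι) :
    Measurable fun y : ι → E => Sum.elim x y ∘ α := by
  refine measurable_pi_lambda _ fun i => ?_
  cases hi : α i with
  | inl j => simp [hi]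
  | inr j => simpa [hi] using measurable_pi_apply j

/-- The conditional expectation of `F` evaluated at the sites `α`, given the sample `x` and averaged
over the private points `ι` of the arguments. -/
noncomputable def partialIntegral [Fintype ι] (P : Measure E) (F : (ι → E) → ℝ) (α : ι → κ ⊕ ι)
    (x : κ → E) : ℝ :=
  ∫ y, F (Sum.elim x y ∘ α) ∂(Measure.pi fun _ => P)

instance isFiniteMeasure_mixMeasure (P : Measure E) [IsFiniteMeasure P] (n : ℕ) (x : Fin n → E)
    (b : Bool) : IsFiniteMeasure (mixMeasure P n x b) := by
  cases b <;> unfold mixMeasure <;> infer_instance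

lemma measurableSet_setOf_injective [Countable ι] [MeasurableEq E] :
    MeasurableSet {u : ι → E | Function.Injective u} := by
  simp only [Function.Injective, Set.ofPred_forall]
  refine .iInter fun i => .iInter fun j => ?_
  exact .imp (measurableSet_eq_fun (measurable_pi_apply i) (measurable_pi_apply j)) (.const _)

variable [Fintype ι] {P : Measure E} [IsProbabilityMeasure P]

lemma map_sumElim_comp_position_pi (x : κ → E) (j : ι → κ) (ε : ι → Bool) (s : ι → Set E)
    (hs : ∀ i, MeasurableSet (s i)) :
    (Measure.pi fun _ => P).map (fun y => Sum.elim x y ∘ position j ε) (Set.univ.pi s) =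
      ∏ i, (if ε i then Measure.dirac (x (j i)) else P) (s i) := by
  have preimage_eq : (fun y => Sum.elim x y ∘ position j ε) ⁻¹' Set.univ.pi s =
      Set.univ.pi fun i => if ε i then {_y | x (j i) ∈ s i} else s i := by
    ext y
    simp only [Set.mem_preimage, Set.mem_univ_pi, Function.comp_apply]
    refine forall_congr' fun i => ?_
    cases hi : ε i <;> simp [position, hi]
  rw [Measure.map_apply (measurable_sumElim_comp x _) (.univ_pi hs), preimage_eq, Measure.pi_pi]
  refine Finset.prod_congr rfl fun i _ => ?_
  cases ε i
  · simp
  · by_cases hx : x (j i) ∈ s i <;> simp [hx, Measure.dirac_apply' _ (hs i)]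

lemma pi_mixMeasure [DecidableEq ι] {n : ℕ} (x : Fin n → E) (ε : ι → Bool) :
    Measure.pi (fun i => mixMeasure P n x (ε i)) =
      ∑ j : ι → Fin n, (Measure.pi fun _ => P).map fun y => Sum.elim x y ∘ position j ε := by
  refine Measure.pi_eq fun s hs => ?_
  simp_rw [Measure.finsetSum_apply, map_sumElim_comp_position_pi x _ ε s hs]
  rw [← Fintype.prod_sum fun i l => (if ε i then Measure.dirac (x l) else P) (s i)]
  refine Finset.prod_congr rfl fun i _ => ?_
  cases ε i <;> simp [mixMeasure, Measure.finsetSum_apply]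

lemma memLp_comp_of_support_subset {J : Type*} [Fintype J] {F : (ι → E) → ℝ} {p : ℝ≥0∞}
    (hF : MemLp F p (Measure.pi fun _ => P))
    (hF0 : Function.support F ⊆ {u | Function.Injective u}) (α : ι → J) :
    MemLp (fun w => F (w ∘ α)) p (Measure.pi fun _ => P) := by
  by_cases hα : Function.Injective α
  · exact hF.comp_measurePreserving (measurePreserving_comp_of_injective P hα)
  · convert MemLp.zero (ε := ℝ) using 2 with w
    by_contra hw
    exact hα (hF0 hw).of_comp

variable [Fintype κ]

lemma measurePreserving_sumElim (P : Measure E) [SigmaFinite P] :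
    MeasurePreserving (fun p : (κ → E) × (ι → E) => Sum.elim p.1 p.2)
      ((Measure.pi fun _ => P).prod (Measure.pi fun _ => P)) (Measure.pi fun _ => P) := by
  convert measurePreserving_sumPiEquivProdPi_symm (X := fun _ : κ ⊕ ι => E) (fun _ => P) using 1
  funext p s
  cases s <;> rfl

lemma ae_ae_map_sumElim_comp [MeasurableEq E] {p : (ι → E) → Prop}
    (hp : ∀ᵐ u ∂(Measure.pi fun _ => P), p u) (hp0 : ∀ u, ¬ Function.Injective u → p u)
    (α : ι → κ ⊕ ι) :
    ∀ᵐ x ∂(Measure.pi fun _ => P),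
      ∀ᵐ u ∂((Measure.pi fun _ => P).map fun y => Sum.elim x y ∘ α), p u := by
  let N := toMeasurable (Measure.pi fun _ => P) {u : ι → E | ¬ p u} ∩ {u | Function.Injective u}
  have p_of_notMem {u : ι → E} (hu : u ∉ N) : p u := by
    by_contra hpu
    exact hu ⟨subset_toMeasurable _ _ hpu, not_not.mp fun h => hpu (hp0 u h)⟩
  have N_measurable : MeasurableSet N :=
    (measurableSet_toMeasurable _ _).inter measurableSet_setOf_injective
  have ae_comp_notMem : ∀ᵐ w ∂(Measure.pi fun _ : κ ⊕ ι => P), w ∘ α ∉ N := by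
    by_cases hα : Function.Injective α
    · refine (measurePreserving_comp_of_injective P hα).quasiMeasurePreserving.ae
        (measure_eq_zero_iff_ae_notMem.mp (measure_mono_null Set.inter_subset_left ?_))
      rw [measure_toMeasurable]
      exact hp
    · exact .of_forall fun w hw => hα hw.2.of_comp
  filter_upwards [Measure.ae_ae_of_ae_prod
    ((measurePreserving_sumElim P).quasiMeasurePreserving.ae ae_comp_notMem)] with x hx
  refine Eventually.mono ?_ fun u => p_of_notMem
  exact (ae_map_iff (measurable_sumElim_comp x α).aemeasurable N_measurable.compl).mpr hx

lemma ae_integrable_map_sumElim_comp [MeasurableEq E] {F : (ι → E) → ℝ}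
    (hF : Integrable F (Measure.pi fun _ => P))
    (hF0 : Function.support F ⊆ {u | Function.Injective u}) (α : ι → κ ⊕ ι) :
    ∀ᵐ x ∂(Measure.pi fun _ => P),
      Integrable F ((Measure.pi fun _ => P).map fun y => Sum.elim x y ∘ α) := by
  let F' := {u | Function.Injective u}.indicator (hF.1.mk F)
  have F'_measurable : StronglyMeasurable F' :=
    hF.1.stronglyMeasurable_mk.indicator measurableSet_setOf_injective
  have F_eq_zero {u : ι → E} (hu : ¬ Function.Injective u) : F u = 0 :=
    Function.notMem_support.mp fun h => hu (hF0 h)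
  have F_ae_eq : ∀ᵐ u ∂(Measure.pi fun _ => P), F u = F' u := by
    filter_upwards [hF.1.ae_eq_mk] with u hu
    by_cases hinj : Function.Injective u
    · simpa [F', hinj] using hu
    · simp [F', hinj, F_eq_zero hinj]
  have eq_of_not_injective (u : ι → E) (hu : ¬ Function.Injective u) : F u = F' u := by
    simp [F', hu, F_eq_zero hu]
  have comp_integrable : Integrable (fun w : κ ⊕ ι → E => F (w ∘ α)) (Measure.pi fun _ => P) :=
    memLp_one_iff_integrable.mp
      (memLp_comp_of_support_subset (memLp_one_iff_integrable.mpr hF) hF0 α)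
  filter_upwards [ae_ae_map_sumElim_comp F_ae_eq eq_of_not_injective α,
    ((measurePreserving_sumElim P).integrable_comp_of_integrable comp_integrable).prod_right_ae]
    with x hx_eq hx_int
  exact (integrable_map_measure ⟨F', F'_measurable, hx_eq⟩
    (measurable_sumElim_comp x α).aemeasurable).mpr hx_int

lemma empInt_ae_eq [MeasurableEq E] {n k : ℕ} (a : ℝ) {F : (Fin k → E) → ℝ}
    (hF : Integrable F (Measure.pi fun _ => P))
    (hF0 : Function.support F ⊆ {u | Function.Injective u}) :
    ∀ᵐ x ∂(Measure.pi fun _ => P), empInt P n a x k F = (√a)⁻¹ ^ k *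
      ∑ j : Fin k → Fin n, ∑ ε, boolSign ε * partialIntegral P F (position j ε) x := by
  have ae_integrable : ∀ᵐ x ∂(Measure.pi fun _ : Fin n => P), ∀ α : Fin k → Fin n ⊕ Fin k,
      Integrable F ((Measure.pi fun _ => P).map fun y => Sum.elim x y ∘ α) :=
    ae_all_iff.mpr (ae_integrable_map_sumElim_comp hF hF0)
  filter_upwards [ae_integrable] with x hx
  rw [empInt, Finset.sum_comm]
  congr 1
  refine Finset.sum_congr rfl fun ε _ => ?_
  rw [← Finset.mul_sum, boolSign_eq_neg_one_pow, pi_mixMeasure,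
    setIntegral_eq_integral_of_forall_compl_eq_zero fun u hu =>
      Function.notMem_support.mp fun h => hu (hF0 h),
    integral_finsetSum_measure fun j _ => hx _]
  congr 1
  refine Finset.sum_congr rfl fun j _ => ?_
  exact integral_map (measurable_sumElim_comp x _).aemeasurable (hx _).1

end Expansion

section SecondMoment

lemma sum_mul_sum_eq_sum_comp_inl_mul_comp_inr {S T κ R : Type*} [Fintype S] [Fintype T]
    [Fintype κ] [DecidableEq S] [DecidableEq T] [NonUnitalNonAssocSemiring R] (A : (S → κ) → R)
    (B : (T → κ) → R) :
    (∑ j, A j) * ∑ j, B j = ∑ h : S ⊕ T → κ, A (h ∘ Sum.inl) * B (h ∘ Sum.inr) := by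
  rw [Finset.sum_mul_sum, ← Fintype.sum_prod_type']
  exact (Fintype.sum_equiv (Equiv.sumArrowEquivProdArrow S T κ) _ _ fun _ => rfl).symm

variable {ι κ E : Type*}

lemma sumElim_sumElim_comp_position_comp_inl {S T : Type*} (x : κ → E) (y : S → E) (z : T → E)
    (h : S ⊕ T → κ) (ε : S ⊕ T → Bool) :
    Sum.elim x (Sum.elim y z) ∘ position h ε ∘ Sum.inl =
      Sum.elim x y ∘ position (h ∘ Sum.inl) (ε ∘ Sum.inl) := by
  funext s
  cases hs : ε (.inl s) <;> simp [position, hs]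

lemma sumElim_sumElim_comp_position_comp_inr {S T : Type*} (x : κ → E) (y : S → E) (z : T → E)
    (h : S ⊕ T → κ) (ε : S ⊕ T → Bool) :
    Sum.elim x (Sum.elim y z) ∘ position h ε ∘ Sum.inr =
      Sum.elim x z ∘ position (h ∘ Sum.inr) (ε ∘ Sum.inr) := by
  funext s
  cases hs : ε (.inr s) <;> simp [position, hs]

variable [MeasurableSpace E] [Fintype ι] {P : Measure E} [IsProbabilityMeasure P]
  {F G : (ι → E) → ℝ}

lemma integral_sumElim_mul_sumElim (h : ι ⊕ ι → κ) (ε : ι ⊕ ι → Bool) (x : κ → E) :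
    ∫ p : (ι → E) × (ι → E), F (Sum.elim x (Sum.elim p.1 p.2) ∘ position h ε ∘ Sum.inl) *
        G (Sum.elim x (Sum.elim p.1 p.2) ∘ position h ε ∘ Sum.inr)
        ∂((Measure.pi fun _ => P).prod (Measure.pi fun _ => P)) =
      partialIntegral P F (position (h ∘ Sum.inl) (ε ∘ Sum.inl)) x *
        partialIntegral P G (position (h ∘ Sum.inr) (ε ∘ Sum.inr)) x := by
  simp only [sumElim_sumElim_comp_position_comp_inl, sumElim_sumElim_comp_position_comp_inr]
  exact integral_prod_mul (fun y => F (Sum.elim x y ∘ position _ _))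
    fun z => G (Sum.elim x z ∘ position _ _)

variable [Fintype κ]

lemma measurePreserving_sumElim_sumElim (P : Measure E) [SigmaFinite P] :
    MeasurePreserving
      (fun p : (κ → E) × ((ι → E) × (ι → E)) => Sum.elim p.1 (Sum.elim p.2.1 p.2.2))
      ((Measure.pi fun _ => P).prod ((Measure.pi fun _ => P).prod (Measure.pi fun _ => P)))
      (Measure.pi fun _ => P) :=
  (measurePreserving_sumElim P).comp
    ((MeasurePreserving.id _).prod (measurePreserving_sumElim P))

lemma integrable_comp_mul_comp {J : Type*} [Fintype J] (hF : MemLp F 2 (Measure.pi fun _ => P))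
    (hG : MemLp G 2 (Measure.pi fun _ => P))
    (hF0 : Function.support F ⊆ {u | Function.Injective u})
    (hG0 : Function.support G ⊆ {u | Function.Injective u}) (L : ι ⊕ ι → J) :
    Integrable (fun w : J → E => F (w ∘ L ∘ Sum.inl) * G (w ∘ L ∘ Sum.inr))
      (Measure.pi fun _ => P) :=
  (memLp_comp_of_support_subset hF hF0 _).integrable_mul (memLp_comp_of_support_subset hG hG0 _)

lemma integrable_partialIntegral_mul (hF : MemLp F 2 (Measure.pi fun _ => P))
    (hG : MemLp G 2 (Measure.pi fun _ => P))
    (hF0 : Function.support F ⊆ {u | Function.Injective u})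
    (hG0 : Function.support G ⊆ {u | Function.Injective u}) (h : ι ⊕ ι → κ) (ε : ι ⊕ ι → Bool) :
    Integrable (fun x => partialIntegral P F (position (h ∘ Sum.inl) (ε ∘ Sum.inl)) x *
      partialIntegral P G (position (h ∘ Sum.inr) (ε ∘ Sum.inr)) x) (Measure.pi fun _ => P) := by
  simp only [← integral_sumElim_mul_sumElim]
  exact ((measurePreserving_sumElim_sumElim P).integrable_comp_of_integrable
    (integrable_comp_mul_comp hF hG hF0 hG0 (position h ε))).integral_prod_left

lemma integral_partialIntegral_mul (hF : MemLp F 2 (Measure.pi fun _ => P))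
    (hG : MemLp G 2 (Measure.pi fun _ => P))
    (hF0 : Function.support F ⊆ {u | Function.Injective u})
    (hG0 : Function.support G ⊆ {u | Function.Injective u}) (h : ι ⊕ ι → κ) (ε : ι ⊕ ι → Bool) :
    ∫ x, partialIntegral P F (position (h ∘ Sum.inl) (ε ∘ Sum.inl)) x *
        partialIntegral P G (position (h ∘ Sum.inr) (ε ∘ Sum.inr)) x ∂(Measure.pi fun _ => P) =
      crossMoment P F G (position h ε) := by
  have law := measurePreserving_sumElim_sumElim (ι := ι) (κ := κ) P
  have integrable := integrable_comp_mul_comp hF hG hF0 hG0 (position h ε)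
  simp only [← integral_sumElim_mul_sumElim]
  rw [crossMoment, ← law.map_eq, integral_map law.aemeasurable (law.map_eq ▸ integrable.1)]
  exact (integral_prod _ (law.integrable_comp_of_integrable integrable)).symm

variable [MeasurableEq E] {n k : ℕ} {F G : (Fin k → E) → ℝ} {a : ℝ}

lemma empInt_mul_empInt_ae_eq (ha : 0 ≤ a) (hF : Integrable F (Measure.pi fun _ => P))
    (hG : Integrable G (Measure.pi fun _ => P))
    (hF0 : Function.support F ⊆ {u | Function.Injective u})
    (hG0 : Function.support G ⊆ {u | Function.Injective u}) :
    (fun x => empInt P n a x k F * empInt P n a x k G) =ᵐ[Measure.pi fun _ => P] fun x =>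
      a⁻¹ ^ k * ∑ h : Fin k ⊕ Fin k → Fin n, ∑ ε, boolSign ε *
        (partialIntegral P F (position (h ∘ Sum.inl) (ε ∘ Sum.inl)) x *
          partialIntegral P G (position (h ∘ Sum.inr) (ε ∘ Sum.inr)) x) := by
  filter_upwards [empInt_ae_eq a hF hF0, empInt_ae_eq a hG hG0] with x hxF hxG
  rw [hxF, hxG, mul_mul_mul_comm, ← mul_pow, ← mul_inv, Real.mul_self_sqrt ha,
    sum_mul_sum_eq_sum_comp_inl_mul_comp_inr]
  congr 1
  refine Finset.sum_congr rfl fun h _ => ?_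
  rw [sum_mul_sum_eq_sum_comp_inl_mul_comp_inr]
  refine Finset.sum_congr rfl fun ε _ => ?_
  rw [boolSign_eq_mul, mul_mul_mul_comm]

lemma integral_empInt_mul_empInt {Ω : Type*} [MeasurableSpace Ω] {Pr : Measure Ω}
    {X : Ω → Fin n → E} (hX : MeasurePreserving X Pr (Measure.pi fun _ => P)) (ha : 0 ≤ a)
    (hF : MemLp F 2 (Measure.pi fun _ => P)) (hG : MemLp G 2 (Measure.pi fun _ => P))
    (hF0 : Function.support F ⊆ {u | Function.Injective u})
    (hG0 : Function.support G ⊆ {u | Function.Injective u}) :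
    ∫ ω, empInt P n a (X ω) k F * empInt P n a (X ω) k G ∂Pr =
      a⁻¹ ^ k * ∑ h : Fin k ⊕ Fin k → Fin n, ∑ ε,
        boolSign ε * crossMoment P F G (position h ε) := by
  have expansion := empInt_mul_empInt_ae_eq (n := n) ha (hF.integrable one_le_two)
    (hG.integrable one_le_two) hF0 hG0
  have term_integrable (h : Fin k ⊕ Fin k → Fin n) (ε) :=
    (integrable_partialIntegral_mul hF hG hF0 hG0 h ε).const_mul (boolSign ε)
  have inner_integrable (h : Fin k ⊕ Fin k → Fin n) :=
    integrable_finsetSum Finset.univ fun ε _ => term_integrable h ε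
  have integrable := (integrable_finsetSum Finset.univ fun h _ => inner_integrable h).const_mul
    (a⁻¹ ^ k) |>.congr expansion.symm
  calc ∫ ω, empInt P n a (X ω) k F * empInt P n a (X ω) k G ∂Pr
      = ∫ x, empInt P n a x k F * empInt P n a x k G ∂(Measure.pi fun _ => P) := by
        rw [← hX.map_eq, integral_map hX.aemeasurable (hX.map_eq ▸ integrable.1)]
    _ = _ := by
        rw [integral_congr_ae expansion, integral_const_mul,
          integral_finsetSum _ fun h _ => inner_integrable h]
        simp_rw [integral_finsetSum _ fun ε _ => term_integrable _ ε, integral_const_mul,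
          integral_partialIntegral_mul hF hG hF0 hG0]

end SecondMoment

section Diagonals

variable {ι E : Type*} [Fintype ι] [MeasurableSpace E]

lemma ae_eval_ne_eval_pi [MeasurableEq E] (μ : Measure E) [SigmaFinite μ] [NullSingletonClass μ]
    {i j : ι} (hij : i ≠ j) : ∀ᵐ u ∂(Measure.pi fun _ : ι => μ), u i ≠ u j := by
  classical
  let diagonal : Set (ι → E) := {u | u i = u j}
  have diagonal_measurable : MeasurableSet diagonal :=
    measurableSet_eq_fun (measurable_pi_apply i) (measurable_pi_apply j)
  have slice_null (x : ι → E) : ∫⁻ y, diagonal.indicator 1 (Function.update x i y) ∂μ = 0 := by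
    have slice_eq (y : E) : diagonal.indicator (1 : (ι → E) → ℝ≥0∞) (Function.update x i y) =
        ({x j} : Set E).indicator 1 y := by
      simp [diagonal, Set.indicator_apply, hij.symm]
    rw [lintegral_congr slice_eq, lintegral_indicator_one₀ (.of_null (measure_singleton _)),
      measure_singleton]
  have diagonal_null : Measure.pi (fun _ => μ) diagonal = 0 := by
    rw [← lintegral_indicator_one diagonal_measurable]
    obtain _ | ⟨⟨x⟩⟩ := isEmpty_or_nonempty (ι → E)
    · exact lintegral_of_isEmpty _ _
    · rw [lintegral_eq_lmarginal_univ x, lmarginal_erase' _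
        (measurable_one.indicator diagonal_measurable) (Finset.mem_univ i)]
      simp_rw [slice_null]
      simp [lmarginal]
  exact measure_eq_zero_iff_ae_notMem.mp diagonal_null

lemma ae_injective_pi [MeasurableEq E] (μ : Measure E) [SigmaFinite μ] [NullSingletonClass μ] :
    ∀ᵐ u ∂(Measure.pi fun _ : ι => μ), Function.Injective u := by
  have pairwise : ∀ᵐ u ∂(Measure.pi fun _ : ι => μ), ∀ i j, i ≠ j → u i ≠ u j :=
    ae_all_iff.mpr fun i => ae_all_iff.mpr fun j => ae_all_iff.mpr (ae_eval_ne_eval_pi μ)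
  filter_upwards [pairwise] with u hu i j
  exact not_imp_not.mp (hu i j)

lemma empInt_indicator_injective (P : Measure E) (n : ℕ) (a : ℝ) (x : Fin n → E) (k : ℕ)
    (f : (Fin k → E) → ℝ) [MeasurableEq E] :
    empInt P n a x k ({u | Function.Injective u}.indicator f) = empInt P n a x k f := by
  simp only [empInt, setIntegral_indicator measurableSet_setOf_injective, Set.inter_self]

lemma integral_indicator_injective_mul [MeasurableEq E] {μ : Measure E} [SigmaFinite μ]
    [NullSingletonClass μ] (f g : (ι → E) → ℝ) (π : Equiv.Perm ι) :
    ∫ u, {u | Function.Injective u}.indicator f u *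
        {u | Function.Injective u}.indicator g (u ∘ π) ∂(Measure.pi fun _ => μ) =
      ∫ u, f u * g (u ∘ π) ∂(Measure.pi fun _ => μ) := by
  refine integral_congr_ae ?_
  filter_upwards [ae_injective_pi μ] with u hu
  simp [hu, π.injective]

end Diagonals

section Symmetrization

variable {E : Type*} [MeasurableSpace E] {k : ℕ} {μ : Measure E} [SigmaFinite μ]
  {f g : (Fin k → E) → ℝ}

lemma factorial_mul_integral_symmetrize_mul (hf : MemLp f 2 (Measure.pi fun _ => μ))
    (hg : MemLp g 2 (Measure.pi fun _ => μ)) :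
    k.factorial * ∫ u, symmetrize k f u * symmetrize k g u ∂(Measure.pi fun _ => μ) =
      ∑ π : Equiv.Perm (Fin k), ∫ u, f u * g (u ∘ π) ∂(Measure.pi fun _ => μ) := by
  have integrable (σ τ : Equiv.Perm (Fin k)) :
      Integrable (fun u => f (u ∘ σ) * g (u ∘ τ)) (Measure.pi fun _ => μ) :=
    (hf.comp_measurePreserving (measurePreserving_comp_perm μ σ)).integrable_mul
      (hg.comp_measurePreserving (measurePreserving_comp_perm μ τ))
  have product_eq (u : Fin k → E) : symmetrize k f u * symmetrize k g u =
      (k.factorial : ℝ)⁻¹ * (k.factorial : ℝ)⁻¹ *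
        ∑ σ : Equiv.Perm (Fin k), ∑ τ : Equiv.Perm (Fin k), f (u ∘ σ) * g (u ∘ τ) := by
    rw [← Finset.sum_mul_sum, symmetrize, symmetrize, mul_mul_mul_comm]
  have inner_eq (σ : Equiv.Perm (Fin k)) :
      ∑ τ : Equiv.Perm (Fin k), ∫ u, f (u ∘ σ) * g (u ∘ τ) ∂(Measure.pi fun _ => μ) =
        ∑ π : Equiv.Perm (Fin k), ∫ u, f u * g (u ∘ π) ∂(Measure.pi fun _ => μ) := by
    rw [← Equiv.sum_comp (Equiv.mulLeft σ)]
    exact Finset.sum_congr rfl fun π _ => integral_comp_perm μ σ fun u => f u * g (u ∘ π)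
  simp_rw [product_eq]
  rw [integral_const_mul,
    integral_finsetSum _ fun σ _ => integrable_finsetSum _ fun τ _ => integrable σ τ]
  simp_rw [integral_finsetSum _ fun τ _ => integrable _ τ, inner_eq]
  simp only [Finset.sum_const, Finset.card_univ, Fintype.card_perm, Fintype.card_fin, nsmul_eq_mul]
  field_simp

end Symmetrization

section Asymptotics

variable {E : Type*} [MeasurableSpace E]

/-- The measures `μ_n = (n / a_n) P_n`, which increase to the control measure `μ`;
`scaledLaw a P 0` is the zero measure. -/
noncomputable def scaledLaw (a : ℕ → ℝ) (P : ℕ → Measure E) (n : ℕ) : Measure E :=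
  ((n : ℝ) / a n).toNNReal • P n

lemma scaledLaw_apply (a : ℕ → ℝ) (P : ℕ → Measure E) (n : ℕ) (B : Set E) :
    scaledLaw a P n B = ENNReal.ofReal ((n : ℝ) / a n) * P n B :=
  Measure.coe_nnreal_smul_apply _ _ _

lemma le_smul_of_scaledLaw_le {μ : Measure E} {a : ℕ → ℝ} {P : ℕ → Measure E} {n : ℕ}
    (hn : 1 ≤ n) (ha : 0 < a n) (h : scaledLaw a P n ≤ μ) : P n ≤ (a n / n).toNNReal • μ := by
  have n_pos : (0 : ℝ) < n := Nat.cast_pos.mpr hn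
  have inverse_scale : (a n / n).toNNReal * ((n : ℝ) / a n).toNNReal = 1 := by
    rw [← Real.toNNReal_mul (by positivity), div_mul_div_cancel₀ n_pos.ne', div_self ha.ne',
      Real.toNNReal_one]
  calc P n = (a n / n).toNNReal • scaledLaw a P n := by
        rw [scaledLaw, smul_smul, inverse_scale, one_smul]
    _ ≤ (a n / n).toNNReal • μ := by gcongr

lemma tendsto_descFactorial_mul_integral_pi {μ : Measure E} [SigmaFinite μ] {a : ℕ → ℝ}
    {P : ℕ → Measure E} [∀ n, IsProbabilityMeasure (P n)] (ha : ∀ n, 1 ≤ n → 0 < a n)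
    (hmono : Monotone (scaledLaw a P))
    (hlim : ∀ B, MeasurableSet B → Tendsto (fun n => scaledLaw a P n B) atTop (𝓝 (μ B))) {k : ℕ}
    {φ : (Fin k → E) → ℝ} (hφ : Integrable φ (Measure.pi fun _ => μ)) :
    Tendsto (fun n => (a n)⁻¹ ^ k * (n.descFactorial k * ∫ u, φ u ∂(Measure.pi fun _ => P n)))
      atTop (𝓝 (∫ u, φ u ∂(Measure.pi fun _ => μ))) := by
  have ratio_tendsto : Tendsto (fun n : ℕ => (n.descFactorial k : ℝ) / n ^ k) atTop (𝓝 1) :=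
    (Asymptotics.isEquivalent_iff_tendsto_one
      ((eventually_ge_atTop 1).mono fun n hn => by positivity)).mp (isEquivalent_descFactorial k)
  have product_tendsto := ratio_tendsto.mul (tendsto_integral_pi_of_monotone hmono hlim hφ)
  rw [one_mul] at product_tendsto
  refine product_tendsto.congr' ((eventually_ge_atTop 1).mono fun n hn => ?_)
  have n_pos : (0 : ℝ) < n := Nat.cast_pos.mpr hn
  have := ha n hn
  simp only [scaledLaw, pi_smul_measure, Fintype.card_fin, integral_smul_nnreal_measure,
    NNReal.smul_def, NNReal.coe_pow, smul_eq_mul, Real.coe_toNNReal _ (div_pos n_pos this).le,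
    div_pow, inv_pow]
  field_simp

section KernelsOffDiagonal

variable [MeasurableEq E] {k : ℕ} {F G : (Fin k → E) → ℝ}

lemma abs_integral_empInt_mul_empInt_sub_le {Ω : Type*} [MeasurableSpace Ω] {Pr : Measure Ω}
    {P : Measure E} [IsProbabilityMeasure P] {n : ℕ} (hn : 1 ≤ n) {a : ℝ} (ha : 0 < a)
    {X : Ω → Fin n → E} (hX : MeasurePreserving X Pr (Measure.pi fun _ => P))
    (hF : MemLp F 2 (Measure.pi fun _ => P)) (hG : MemLp G 2 (Measure.pi fun _ => P))
    (hF0 : Function.support F ⊆ {u | Function.Injective u})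
    (hG0 : Function.support G ⊆ {u | Function.Injective u}) {δ : ℝ} (hδ : 0 ≤ δ)
    (hcross : ∀ L : Fin k ⊕ Fin k → Fin n ⊕ (Fin k ⊕ Fin k), (∀ π, ¬ IsMatched L π) →
      |crossMoment P F G L| ≤ (a / n) ^ k * δ) :
    |(∫ ω, empInt P n a (X ω) k F * empInt P n a (X ω) k G ∂Pr) -
      a⁻¹ ^ k * (n.descFactorial k *
        ∑ π : Equiv.Perm (Fin k), ∫ u, F u * G (u ∘ π) ∂(Measure.pi fun _ => P))| ≤
      k ^ (k + k) * 2 ^ (k + k) * δ := by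
  have : (0 : ℝ) < n := Nat.cast_pos.mpr hn
  have : NeZero n := ⟨Nat.one_le_iff_ne_zero.mp hn⟩
  have placements_le := abs_sum_sum_boolSign_mul_sub_le (κ := Fin n) (ι := Fin k)
    crossMoment_perm_comp (fun _ _ => crossMoment_of_isMatched hF.1 hG.1)
    (by positivity : 0 ≤ (a / n) ^ k * δ) hcross
  simp only [Fintype.card_sum, Fintype.card_fin] at placements_le
  rw [integral_empInt_mul_empInt hX ha.le hF hG hF0 hG0, ← mul_sub, abs_mul,
    abs_of_pos (by positivity : 0 < a⁻¹ ^ k)]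
  calc _ ≤ a⁻¹ ^ k * (k ^ (k + k) * n ^ k * (2 ^ (k + k) * ((a / n) ^ k * δ))) := by gcongr
    _ = k ^ (k + k) * 2 ^ (k + k) * δ := by
        rw [div_pow, inv_pow]
        field_simp

variable {μ : Measure E} [SigmaFinite μ] {a : ℕ → ℝ} {P : ℕ → Measure E}
  [∀ n, IsProbabilityMeasure (P n)] {Ω : ℕ → Type*} [∀ n, MeasurableSpace (Ω n)]
  {Pr : ∀ n, Measure (Ω n)} {X : ∀ n, Ω n → Fin n → E}

lemma tendsto_integral_empInt_mul_empInt_sub (ha : ∀ n, 1 ≤ n → 0 < a n)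
    (ha0 : Tendsto (fun n : ℕ => a n / n) atTop (𝓝 0)) (hle : ∀ n, scaledLaw a P n ≤ μ)
    (hX : ∀ n, 1 ≤ n → MeasurePreserving (X n) (Pr n) (Measure.pi fun _ => P n))
    (hF : MemLp F 2 (Measure.pi fun _ => μ)) (hG : MemLp G 2 (Measure.pi fun _ => μ))
    (hF0 : Function.support F ⊆ {u | Function.Injective u})
    (hG0 : Function.support G ⊆ {u | Function.Injective u}) :
    Tendsto (fun n => (∫ ω, empInt (P n) n (a n) (X n ω) k F *
        empInt (P n) n (a n) (X n ω) k G ∂(Pr n)) -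
      (a n)⁻¹ ^ k * (n.descFactorial k *
        ∑ π : Equiv.Perm (Fin k), ∫ u, F u * G (u ∘ π) ∂(Measure.pi fun _ => P n)))
      atTop (𝓝 0) := by
  have hP (n : ℕ) (hn : 1 ≤ n) : P n ≤ (a n / n).toNNReal • μ :=
    le_smul_of_scaledLaw_le hn (ha n hn) (hle n)
  have scale_tendsto : Tendsto (fun n : ℕ => (a n / n).toNNReal) atTop (𝓝 0) := by
    simpa using tendsto_real_toNNReal ha0
  let C : ℝ := k ^ (k + k) * 2 ^ (k + k) + 1
  have C_pos : 0 < C := by positivity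
  refine Metric.tendsto_nhds.mpr fun η η_pos => ?_
  have δ_pos : 0 < η / C := div_pos η_pos C_pos
  filter_upwards [eventually_ge_atTop 1, eventually_enorm_crossMoment_le
    ((eventually_ge_atTop 1).mono hP) scale_tendsto hF hG hF0 hG0
    (ENNReal.ofReal_pos.mpr δ_pos).ne'] with n hn hcross
  have memLp_of_le {H : (Fin k → E) → ℝ} (hH : MemLp H 2 (Measure.pi fun _ => μ)) :
      MemLp H 2 (Measure.pi fun _ => P n) :=
    hH.of_measure_le_smul ENNReal.coe_ne_top (pi_le_smul_pi (hP n hn))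
  have abs_crossMoment_le (L : Fin k ⊕ Fin k → Fin n ⊕ (Fin k ⊕ Fin k))
      (hL : ∀ π, ¬ IsMatched L π) : |crossMoment (P n) F G L| ≤ (a n / n) ^ k * (η / C) := by
    have scale_nonneg : 0 ≤ a n / n := div_nonneg (ha n hn).le n.cast_nonneg
    have enorm_le := hcross _ L hL
    rwa [Fintype.card_fin, ← ofReal_norm, Real.norm_eq_abs, ← ENNReal.ofReal,
      ← ENNReal.ofReal_pow scale_nonneg, ← ENNReal.ofReal_mul (by positivity),
      ENNReal.ofReal_le_ofReal_iff (by positivity)] at enorm_le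
  rw [dist_zero_right, Real.norm_eq_abs]
  calc _ ≤ k ^ (k + k) * 2 ^ (k + k) * (η / C) :=
        abs_integral_empInt_mul_empInt_sub_le hn (ha n hn) (hX n hn) (memLp_of_le hF)
          (memLp_of_le hG) hF0 hG0 δ_pos.le abs_crossMoment_le
    _ < C * (η / C) := by gcongr; exact lt_add_one _
    _ = η := mul_div_cancel₀ η C_pos.ne'

lemma tendsto_integral_empInt_mul_empInt (ha : ∀ n, 1 ≤ n → 0 < a n)
    (ha0 : Tendsto (fun n : ℕ => a n / n) atTop (𝓝 0)) (hmono : Monotone (scaledLaw a P))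
    (hlim : ∀ B, MeasurableSet B → Tendsto (fun n => scaledLaw a P n B) atTop (𝓝 (μ B)))
    (hX : ∀ n, 1 ≤ n → MeasurePreserving (X n) (Pr n) (Measure.pi fun _ => P n))
    (hF : MemLp F 2 (Measure.pi fun _ => μ)) (hG : MemLp G 2 (Measure.pi fun _ => μ))
    (hF0 : Function.support F ⊆ {u | Function.Injective u})
    (hG0 : Function.support G ⊆ {u | Function.Injective u}) :
    Tendsto (fun n => ∫ ω, empInt (P n) n (a n) (X n ω) k F *
        empInt (P n) n (a n) (X n ω) k G ∂(Pr n)) atTop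
      (𝓝 (∑ π : Equiv.Perm (Fin k), ∫ u, F u * G (u ∘ π) ∂(Measure.pi fun _ => μ))) := by
  have main_term := tendsto_finsetSum Finset.univ fun π (_ : π ∈ Finset.univ) =>
    tendsto_descFactorial_mul_integral_pi ha hmono hlim
      (hF.integrable_mul (hG.comp_measurePreserving (measurePreserving_comp_perm μ π)))
  have remainder := tendsto_integral_empInt_mul_empInt_sub ha ha0
    (le_of_monotone_of_tendsto hmono hlim) hX hF hG hF0 hG0
  simpa [Finset.mul_sum] using remainder.add main_term

end KernelsOffDiagonal

theorem expectation_empInt_mul_tendsto_same_order_general [MeasurableEq E] {μ : Measure E}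
    [SigmaFinite μ] [NullSingletonClass μ] {a : ℕ → ℝ} {P : ℕ → Measure E}
    [∀ n, IsProbabilityMeasure (P n)] (ha : ∀ n, 1 ≤ n → 0 < a n)
    (ha0 : Tendsto (fun n : ℕ => a n / n) atTop (𝓝 0)) (hmono : Monotone (scaledLaw a P))
    (hlim : ∀ B, MeasurableSet B → Tendsto (fun n => scaledLaw a P n B) atTop (𝓝 (μ B)))
    {Ω : ℕ → Type*} [∀ n, MeasurableSpace (Ω n)] {Pr : ∀ n, Measure (Ω n)}
    {X : ∀ n, Ω n → Fin n → E}
    (hX : ∀ n, 1 ≤ n → MeasurePreserving (X n) (Pr n) (Measure.pi fun _ => P n))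
    {k : ℕ} {f g : (Fin k → E) → ℝ} (hf : MemLp f 2 (Measure.pi fun _ => μ))
    (hg : MemLp g 2 (Measure.pi fun _ => μ)) :
    Tendsto (fun n => ∫ ω, empInt (P n) n (a n) (X n ω) k f *
        empInt (P n) n (a n) (X n ω) k g ∂(Pr n)) atTop
      (𝓝 (k.factorial * ∫ u, symmetrize k f u * symmetrize k g u ∂(Measure.pi fun _ => μ))) := by
  have limit := tendsto_integral_empInt_mul_empInt ha ha0 hmono hlim hX
    (hf.indicator measurableSet_setOf_injective) (hg.indicator measurableSet_setOf_injective)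
    Set.support_indicator_subset Set.support_indicator_subset
  rw [factorial_mul_integral_symmetrize_mul hf hg]
  simpa only [empInt_indicator_injective, integral_indicator_injective_mul] using limit

end Asymptotics

section SamplingScheme

variable {E : Type*} [MeasurableSpace E]

lemma Assumption21.monotone_scaledLaw {μ : Measure E} {a : ℕ → ℝ} {P : ℕ → Measure E}
    (h : Assumption21 μ a P) : Monotone (scaledLaw a P) := by
  obtain ⟨-, -, -, -, hmono, -⟩ := h
  refine monotone_nat_of_le_succ fun n => Measure.le_iff.mpr fun B hB => ?_
  obtain rfl | hn := n.eq_zero_or_pos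
  · simp [scaledLaw]
  · simpa only [scaledLaw_apply, Nat.cast_succ] using hmono B hB n hn

lemma Assumption21.tendsto_scaledLaw {μ : Measure E} {a : ℕ → ℝ} {P : ℕ → Measure E}
    (h : Assumption21 μ a P) {B : Set E} (hB : MeasurableSet B) :
    Tendsto (fun n => scaledLaw a P n B) atTop (𝓝 (μ B)) := by
  obtain ⟨-, -, -, -, -, hlim⟩ := h
  simpa only [scaledLaw_apply] using hlim B hB

lemma measurePreserving_of_iIndepFun {ι Ω : Type*} [Fintype ι] [MeasurableSpace Ω] {Pr : Measure Ω}
    {P : Measure E} {X : ι → Ω → E} (hmeas : ∀ j, Measurable (X j))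
    (hlaw : ∀ j, Measure.map (X j) Pr = P) (hindep : iIndepFun X Pr) :
    MeasurePreserving (fun ω j => X j ω) Pr (Measure.pi fun _ => P) := by
  have := hindep.isProbabilityMeasure
  refine ⟨measurable_pi_lambda _ hmeas, ?_⟩
  rw [(iIndepFun_iff_map_fun_eq_pi_map fun j => (hmeas j).aemeasurable).mp hindep]
  simp only [hlaw]

end SamplingScheme

/-- Under Assumption 2.1, for the multiple empirical integrals of the
triangular array, for every `k ≥ 0` and `f, g ∈ L²(μ^k)`,
`𝔼[I_k^{(n)}(f) I_k^{(n)}(g)] → k! ⟨f̃, g̃⟩_{L²(μ^k)}`. -/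
theorem expectation_empInt_mul_tendsto_same_order
    {E Ω : Type*} [MeasurableSpace E] [MeasurableSpace Ω]
    (μ : Measure E) [SigmaFinite μ] [NullSingletonClass μ]
    (a : ℕ → ℝ) (P : ℕ → Measure E) [∀ n, IsProbabilityMeasure (P n)]
    (h21 : Assumption21 μ a P)
    (Pr : Measure Ω) [IsProbabilityMeasure Pr]
    (X : (n : ℕ) → Fin n → Ω → E)
    (hXmeas : ∀ n j, Measurable (X n j))
    (hXlaw : ∀ n : ℕ, 1 ≤ n → ∀ j, Measure.map (X n j) Pr = P n)
    (hXindep : ∀ n : ℕ, iIndepFun (X n) Pr)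
    (hdiag : MeasurableSet {p : E × E | p.1 = p.2})
    (k : ℕ) (f g : (Fin k → E) → ℝ)
    (hf : MemLp f 2 (Measure.pi fun _ : Fin k => μ))
    (hg : MemLp g 2 (Measure.pi fun _ : Fin k => μ)) :
    Tendsto (fun n : ℕ =>
        ∫ ω, empInt (P n) n (a n) (fun j => X n j ω) k f *
          empInt (P n) n (a n) (fun j => X n j ω) k g ∂Pr)
      atTop
      (𝓝 ((k.factorial : ℝ) *
        ∫ u, symmetrize k f u * symmetrize k g u ∂(Measure.pi fun _ : Fin k => μ))) := by
  have : MeasurableEq E := ⟨hdiag⟩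
  exact expectation_empInt_mul_tendsto_same_order_general h21.2.1 h21.2.2.2.1
    h21.monotone_scaledLaw (fun _ => h21.tendsto_scaledLaw)
    (fun n hn => measurePreserving_of_iIndepFun (hXmeas n) (hXlaw n hn) (hXindep n)) hf hg
end

section
/- There exists a constant C > 0, independent of k and n, such that for every k ≥ 1 and every integer n ≥ k/2, the coefficient B_{n,k} satisfies |B_{n,k}| ≤ C^k / k^{k/2}. -/
open scoped Classical in
/-- `numPartitions k r` is the number of partitions of `{1, …, k}` into disjoint sets whose
multiset of cardinalities is `{r 1, …, r s}`. -/
noncomputable def numPartitions (k : ℕ) {s : ℕ} (r : Fin s → ℕ) : ℕ :=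
  (Finset.univ.filter fun C : Finset (Finset (Fin k)) =>
      (↑C : Set (Finset (Fin k))).PairwiseDisjoint id ∧
      (∀ x : Fin k, ∃ A ∈ C, x ∈ A) ∧
      C.val.map Finset.card = Multiset.map r Finset.univ.val).card

/-- The combinatorial coefficient `B_{n,k}`. -/
noncomputable def Bnk (n k : ℕ) : ℝ :=
  ((k.factorial : ℝ) * Real.sqrt n ^ k)⁻¹ *
    ∑ s ∈ Finset.Icc 1 k,
      (-1 : ℝ) ^ (k - s) * (n.choose s : ℝ) * (s.factorial : ℝ) *
        ∑ r ∈ (Finset.Nat.antidiagonalTuple s k).filter (fun r => ∀ i, 1 ≤ r i),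
          (∏ i, ((r i : ℝ) - 1)) * (numPartitions k r : ℝ)

/-!
A block of size `1` has weight `0`, so only tuples with `2 s ≤ k` contribute to `B_{n,k}`. A
partition whose blocks are labelled by `1, …, s` amounts to a map `{1, …, k} → {1, …, s}`, which
gives `s! B(r₁, …, rₛ) ≤ s ^ k ≤ k ^ k`, and evaluating the generating function `∑ (j - 1) x ^ j`
at `x = 1 / 2`, where it equals `1`, gives `∑ (r₁ - 1) ⋯ (rₛ - 1) ≤ 2 ^ k`. The quotient
`k ^ k / k!` costs a factor `e ^ k`. Finally `2 s ≤ k` and `n ≥ k / 2` allow `n ^ (s - k / 2)` to be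
replaced by `k ^ (s - k / 2)` up to a factor `2 ^ k`, and the remaining `k ^ s / s!` is at most
`e ^ k`.
-/

theorem injective_coe_sigma_equiv {β ι : Type*} :
    Function.Injective fun (p : Σ C : Finset β, ι ≃ C) (i : ι) => (p.2 i : β) := by
  have range_eq (C : Finset β) (e : ι ≃ C) : Set.range (fun i => (e i : β)) = C := by
    rw [Set.range_comp' Subtype.val e, e.surjective.range_eq, Set.image_univ]
    exact Subtype.range_coe
  rintro ⟨C, e⟩ ⟨D, e'⟩ h
  obtain rfl : C = D := Finset.coe_injective <|
    (range_eq C e).symm.trans <| (congrArg Set.range h).trans (range_eq D e')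
  obtain rfl : e = e' := Equiv.ext fun i => Subtype.ext (congrFun h i)
  rfl

theorem exists_fibres_eq_of_existsUnique_mem {α ι : Type*} [Fintype α] [DecidableEq ι]
    {A : ι → Finset α} (hA : ∀ x, ∃! i, x ∈ A i) :
    ∃ f : α → ι, (fun i => Finset.univ.filter (f · = i)) = A := by
  choose label mem_label label_unique using hA
  refine ⟨label, ?_⟩
  ext i x
  simp only [Finset.mem_filter, Finset.mem_univ, true_and]
  exact ⟨fun h => h ▸ mem_label x, fun h => (label_unique x i h).symm⟩

theorem card_mul_factorial_le_pow_of_existsUnique_mem {α : Type*} [Fintype α]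
    (F : Finset (Finset (Finset α))) (s : ℕ) (card_eq : ∀ C ∈ F, C.card = s)
    (existsUnique_mem : ∀ C ∈ F, ∀ x, ∃! A : C, x ∈ A.1) :
    F.card * s.factorial ≤ s ^ Fintype.card α := by
  classical
  have card_labellings : ∀ C ∈ F, Fintype.card (Fin s ≃ C) = s.factorial := fun C hC => by
    rw [Fintype.card_equiv (C.equivFinOfCardEq (card_eq C hC)).symm, Fintype.card_fin]
  let fibres (f : α → Fin s) (i : Fin s) : Finset α := Finset.univ.filter (f · = i)
  calc F.card * s.factorial
      = (F.sigma fun C => (Finset.univ : Finset (Fin s ≃ C))).card := by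
        simp only [Finset.card_sigma, Finset.card_univ]
        rw [Finset.sum_const_nat card_labellings]
    _ ≤ (Finset.univ.image fibres).card := by
        refine Finset.card_le_card_of_injOn _ ?_ injective_coe_sigma_equiv.injOn
        rintro ⟨C, e⟩ hp
        have hC : C ∈ F := (Finset.mem_sigma.1 hp).1
        obtain ⟨f, hf⟩ := exists_fibres_eq_of_existsUnique_mem
          (A := fun i => (e i : Finset α)) fun x =>
            e.bijective.existsUnique_iff.1 (existsUnique_mem C hC x)
        exact Finset.mem_coe.2 (Finset.mem_image.2 ⟨f, Finset.mem_univ f, hf⟩)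
    _ ≤ Fintype.card (α → Fin s) := Finset.card_image_le
    _ = s ^ Fintype.card α := by rw [Fintype.card_fun, Fintype.card_fin]

theorem numPartitions_mul_factorial_le (k : ℕ) {s : ℕ} (r : Fin s → ℕ) :
    numPartitions k r * s.factorial ≤ s ^ k := by
  classical
  suffices numPartitions k r * s.factorial ≤ s ^ Fintype.card (Fin k) by
    rwa [Fintype.card_fin] at this
  refine card_mul_factorial_le_pow_of_existsUnique_mem _ s ?_ ?_
  · intro C hC
    obtain ⟨-, -, cards⟩ := (Finset.mem_filter.1 hC).2
    simpa using congrArg Multiset.card cards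
  · intro C hC x
    obtain ⟨disjoint, cover, -⟩ := (Finset.mem_filter.1 hC).2
    obtain ⟨A, hA, hxA⟩ := cover x
    exact ⟨⟨A, hA⟩, hxA, fun A' hxA' =>
      Subtype.ext (disjoint.elim_finset A'.2 hA x hxA' hxA)⟩

/-- The inner sum of `Bnk`, with the weights `r i - 1` taken in `ℕ`: truncated subtraction gives
tuples with some `r i = 0` weight zero, so the condition `1 ≤ r i` can be dropped. -/
noncomputable def weightedPartitionCount (k s : ℕ) : ℕ :=
  ∑ r ∈ Finset.Nat.antidiagonalTuple s k, (∏ i, (r i - 1)) * numPartitions k r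

theorem cast_weightedPartitionCount (k s : ℕ) :
    (weightedPartitionCount k s : ℝ) =
      ∑ r ∈ (Finset.Nat.antidiagonalTuple s k).filter (fun r => ∀ i, 1 ≤ r i),
        (∏ i, ((r i : ℝ) - 1)) * (numPartitions k r : ℝ) := by
  rw [weightedPartitionCount, Nat.cast_sum, Finset.sum_filter]
  refine Finset.sum_congr rfl fun r _ => ?_
  split_ifs with one_le
  · rw [Nat.cast_mul, Nat.cast_prod]
    simp only [Nat.cast_sub (one_le _), Nat.cast_one]
  · obtain ⟨i, hi⟩ := not_forall.1 one_le
    rw [Finset.prod_eq_zero (Finset.mem_univ i) (by omega), zero_mul, Nat.cast_zero]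

theorem weightedPartitionCount_eq_zero {k s : ℕ} (h : k < 2 * s) :
    weightedPartitionCount k s = 0 := by
  refine Finset.sum_eq_zero fun r hr => ?_
  have sum_lt : ∑ i, r i < ∑ _i : Fin s, 2 := by
    rw [Finset.Nat.mem_antidiagonalTuple.1 hr]
    simpa [mul_comm] using h
  obtain ⟨i, hi, r_lt_two⟩ := Finset.exists_lt_of_sum_lt sum_lt
  rw [Finset.prod_eq_zero hi (by omega), zero_mul]

-- The sum on the left is the coefficient of `x ^ k` in `(∑ f j x ^ j) ^ s`.
theorem pow_mul_sum_antidiagonalTuple_prod_le {R : Type*} [CommSemiring R] [PartialOrder R]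
    [IsOrderedRing R] {f : ℕ → R} (hf : ∀ j, 0 ≤ f j) {x : R} (hx : 0 ≤ x) (s k : ℕ) :
    x ^ k * ∑ r ∈ Finset.Nat.antidiagonalTuple s k, ∏ i, f (r i) ≤
      (∑ j ∈ Finset.range (k + 1), f j * x ^ j) ^ s := by
  have subset_box : Finset.Nat.antidiagonalTuple s k ⊆
      Fintype.piFinset fun _ => Finset.range (k + 1) := fun r hr => by
    rw [Finset.Nat.mem_antidiagonalTuple] at hr
    refine Fintype.mem_piFinset.2 fun i => Finset.mem_range_succ_iff.2 ?_
    exact hr ▸ Finset.single_le_sum_of_canonicallyOrdered (Finset.mem_univ i)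
  calc x ^ k * ∑ r ∈ Finset.Nat.antidiagonalTuple s k, ∏ i, f (r i)
      = ∑ r ∈ Finset.Nat.antidiagonalTuple s k, ∏ i, f (r i) * x ^ r i := by
        rw [Finset.mul_sum]
        refine Finset.sum_congr rfl fun r hr => ?_
        rw [Finset.prod_mul_distrib, Finset.prod_pow_eq_pow_sum,
          Finset.Nat.mem_antidiagonalTuple.1 hr, mul_comm]
    _ ≤ ∑ r ∈ Fintype.piFinset fun _ => Finset.range (k + 1), ∏ i, f (r i) * x ^ r i :=
        Finset.sum_le_sum_of_subset_of_nonneg subset_box fun r _ _ =>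
          Finset.prod_nonneg fun i _ => mul_nonneg (hf _) (pow_nonneg hx _)
    _ = (∑ j ∈ Finset.range (k + 1), f j * x ^ j) ^ s := by
        rw [Finset.sum_pow']

theorem sum_range_succ_pred_mul_half_pow (m : ℕ) :
    ∑ j ∈ Finset.range (m + 1), ((j - 1 : ℕ) : ℝ) * (1 / 2) ^ j =
      1 - (m + 1) * (1 / 2) ^ m := by
  induction m with
  | zero => simp
  | succ m ih =>
    rw [Finset.sum_range_succ, ih, Nat.add_sub_cancel]
    push_cast
    ring

theorem sum_antidiagonalTuple_prod_pred_le (s k : ℕ) :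
    ∑ r ∈ Finset.Nat.antidiagonalTuple s k, ∏ i, (r i - 1) ≤ 2 ^ k := by
  have half_sum_le_one :
      ∑ j ∈ Finset.range (k + 1), ((j - 1 : ℕ) : ℝ) * (1 / 2) ^ j ≤ 1 := by
    rw [sum_range_succ_pred_mul_half_pow]
    exact sub_le_self _ (by positivity)
  have scaled_le_one : (1 / 2 : ℝ) ^ k *
      ∑ r ∈ Finset.Nat.antidiagonalTuple s k, ∏ i, ((r i - 1 : ℕ) : ℝ) ≤ 1 :=
    (pow_mul_sum_antidiagonalTuple_prod_le (f := fun j => ((j - 1 : ℕ) : ℝ))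
      (fun _ => Nat.cast_nonneg _) (by norm_num) s k).trans
      (pow_le_one₀ (Finset.sum_nonneg fun _ _ => by positivity) half_sum_le_one)
  rw [one_div, inv_pow, inv_mul_le_one₀ (by positivity)] at scaled_le_one
  exact_mod_cast scaled_le_one

theorem weightedPartitionCount_mul_factorial_le (k s : ℕ) :
    weightedPartitionCount k s * s.factorial ≤ 2 ^ k * s ^ k := by
  calc weightedPartitionCount k s * s.factorial
      = ∑ r ∈ Finset.Nat.antidiagonalTuple s k,
          (∏ i, (r i - 1)) * (numPartitions k r * s.factorial) := by
        simp only [weightedPartitionCount, Finset.sum_mul, mul_assoc]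
    _ ≤ ∑ r ∈ Finset.Nat.antidiagonalTuple s k, (∏ i, (r i - 1)) * s ^ k := by
        gcongr
        exact numPartitions_mul_factorial_le k _
    _ ≤ 2 ^ k * s ^ k := by
        rw [← Finset.sum_mul]
        gcongr
        exact sum_antidiagonalTuple_prod_pred_le s k

theorem abs_Bnk_le_sum_descFactorial_mul (n k : ℕ) :
    |Bnk n k| ≤ ((k.factorial : ℝ) * Real.sqrt n ^ k)⁻¹ *
      ∑ s ∈ Finset.Icc 1 k, (n.descFactorial s : ℝ) * weightedPartitionCount k s := by
  rw [Bnk, abs_mul, abs_of_nonneg (by positivity)]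
  gcongr
  refine (Finset.abs_sum_le_sum_abs _ _).trans_eq (Finset.sum_congr rfl fun s _ => ?_)
  rw [← cast_weightedPartitionCount, Nat.descFactorial_eq_factorial_mul_choose]
  simp [abs_mul, mul_comm]

theorem pow_mul_pow_le_of_le_mul {R : Type*} [CommSemiring R] [PartialOrder R] [IsOrderedRing R]
    {a b c : R} {j k : ℕ} (ha : 0 ≤ a) (hb : 0 ≤ b) (hc : 1 ≤ c) (hab : a ≤ c * b)
    (hjk : j ≤ k) : b ^ j * a ^ k ≤ c ^ k * a ^ j * b ^ k := by
  have : 0 ≤ c := zero_le_one.trans hc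
  obtain ⟨d, rfl⟩ := Nat.exists_eq_add_of_le hjk
  calc b ^ j * a ^ (j + d) = b ^ j * a ^ j * a ^ d := by ring
    _ ≤ b ^ j * a ^ j * (c * b) ^ d := by gcongr
    _ = c ^ d * (a ^ j * b ^ (j + d)) := by ring
    _ ≤ c ^ (j + d) * (a ^ j * b ^ (j + d)) := by
        gcongr
        exact Nat.le_add_left d j
    _ = c ^ (j + d) * a ^ j * b ^ (j + d) := by ring

theorem pow_mul_sqrt_pow_le {n k s : ℕ} (hkn : k ≤ 2 * n) (hsk : 2 * s ≤ k) :
    (n : ℝ) ^ s * Real.sqrt k ^ k ≤ 2 ^ k * k ^ s * Real.sqrt n ^ k := by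
  have sqrt_le : Real.sqrt k ≤ 2 * Real.sqrt n := by
    refine Real.sqrt_le_iff.2 ⟨by positivity, ?_⟩
    rw [mul_pow, Real.sq_sqrt n.cast_nonneg]
    exact_mod_cast (by omega : k ≤ 2 ^ 2 * n)
  have sqrt_pow (m : ℕ) : Real.sqrt m ^ (2 * s) = (m : ℝ) ^ s := by
    rw [pow_mul, Real.sq_sqrt m.cast_nonneg]
  simpa only [sqrt_pow] using pow_mul_pow_le_of_le_mul (Real.sqrt_nonneg k) (Real.sqrt_nonneg n)
    one_le_two sqrt_le hsk

theorem pow_le_exp_one_pow_mul_factorial (k s : ℕ) :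
    (k : ℝ) ^ s ≤ Real.exp 1 ^ k * s.factorial := by
  rw [← Real.exp_nat_mul, mul_one, ← div_le_iff₀ (by positivity)]
  exact Real.pow_div_factorial_le_exp _ k.cast_nonneg s

theorem descFactorial_mul_weightedPartitionCount_le {n k : ℕ} (hkn : k ≤ 2 * n) (s : ℕ) :
    (n.descFactorial s : ℝ) * weightedPartitionCount k s * Real.sqrt k ^ k ≤
      (4 * Real.exp 1 ^ 2) ^ k * (k.factorial * Real.sqrt n ^ k) := by
  obtain hks | hsk := lt_or_ge k (2 * s)
  · rw [weightedPartitionCount_eq_zero hks, Nat.cast_zero, mul_zero, zero_mul]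
    positivity
  have descFactorial_le : (n.descFactorial s : ℝ) ≤ (n : ℝ) ^ s :=
    mod_cast Nat.descFactorial_le_pow n s
  have count_le : (weightedPartitionCount k s : ℝ) * s.factorial ≤ 2 ^ k * (k : ℝ) ^ k :=
    mod_cast (weightedPartitionCount_mul_factorial_le k s).trans (by gcongr; omega)
  refine le_of_mul_le_mul_right ?_ (by positivity : (0 : ℝ) < s.factorial)
  calc (n.descFactorial s : ℝ) * weightedPartitionCount k s * Real.sqrt k ^ k * s.factorial
      = n.descFactorial s * (weightedPartitionCount k s * s.factorial) * Real.sqrt k ^ k := by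
        ring
    _ ≤ (n : ℝ) ^ s * (2 ^ k * (k : ℝ) ^ k) * Real.sqrt k ^ k := by gcongr
    _ = 2 ^ k * (k : ℝ) ^ k * ((n : ℝ) ^ s * Real.sqrt k ^ k) := by ring
    _ ≤ 2 ^ k * (k : ℝ) ^ k * (2 ^ k * (k : ℝ) ^ s * Real.sqrt n ^ k) := by
        gcongr _ * ?_
        exact pow_mul_sqrt_pow_le hkn hsk
    _ ≤ 2 ^ k * (Real.exp 1 ^ k * k.factorial) *
          (2 ^ k * (Real.exp 1 ^ k * s.factorial) * Real.sqrt n ^ k) := by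
        gcongr <;> exact pow_le_exp_one_pow_mul_factorial k _
    _ = (4 * Real.exp 1 ^ 2) ^ k * (k.factorial * Real.sqrt n ^ k) * s.factorial := by
        rw [mul_pow, show (4 : ℝ) = 2 * 2 by norm_num, mul_pow]
        ring

/-- There is a constant `C > 0`, independent of `k` and `n`, such that for
all `k ≥ 1` and all integers `n ≥ k/2`, `|B_{n,k}| ≤ C^k / k^{k/2}`. -/
theorem abs_Bnk_le :
    ∃ C : ℝ, 0 < C ∧ ∀ k n : ℕ, 1 ≤ k → k ≤ 2 * n →
      |Bnk n k| ≤ C ^ k / Real.sqrt k ^ k := by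
  refine ⟨2 * (4 * Real.exp 1 ^ 2), by positivity, fun k n hk hkn => ?_⟩
  have hn : 0 < n := by omega
  have card_le : (k : ℝ) ≤ 2 ^ k := mod_cast Nat.lt_two_pow_self.le
  rw [le_div_iff₀ (by positivity)]
  calc |Bnk n k| * Real.sqrt k ^ k
      ≤ ((k.factorial : ℝ) * Real.sqrt n ^ k)⁻¹ *
          (∑ s ∈ Finset.Icc 1 k, (n.descFactorial s : ℝ) * weightedPartitionCount k s) *
            Real.sqrt k ^ k := by
        gcongr
        exact abs_Bnk_le_sum_descFactorial_mul n k
    _ = ((k.factorial : ℝ) * Real.sqrt n ^ k)⁻¹ * ∑ s ∈ Finset.Icc 1 k,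
          (n.descFactorial s : ℝ) * weightedPartitionCount k s * Real.sqrt k ^ k := by
        rw [mul_assoc, Finset.sum_mul]
    _ ≤ ((k.factorial : ℝ) * Real.sqrt n ^ k)⁻¹ * ∑ _s ∈ Finset.Icc 1 k,
          (4 * Real.exp 1 ^ 2) ^ k * (k.factorial * Real.sqrt n ^ k) := by
        gcongr _ * ∑ s ∈ _, ?_
        exact descFactorial_mul_weightedPartitionCount_le hkn s
    _ = k * (4 * Real.exp 1 ^ 2) ^ k := by
        rw [Finset.sum_const, Nat.card_Icc, Nat.add_sub_cancel, nsmul_eq_mul]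
        field_simp
    _ ≤ (2 * (4 * Real.exp 1 ^ 2)) ^ k := by
        rw [mul_pow 2]
        gcongr
end
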